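/- Let d ∈ {xd, cd}, let 𝒞1 and 𝒞2 be non-empty classes of frames closed under disjoint unions, and let L_i be a one-variable modal logic (in disjoint modal signatures) globally d-complete for 𝒞_i (i = 1,2). If L1 and L2 are both globally decidable, then the fusion L1 ⊗ L2 is globally decidable. -/

import Mathlib

namespace OneVarML

/-- One-variable first-order modal formulas over modal signature `M`:
atoms `P n` stand for `Pₙ(x)`, `ex φ` stands for `∃x φ`. -/
inductive OV (M : Type) : Type
  | atom : ℕ → OV M
  | neg  : OV M → OV M
  | and  : OV M → OV M → OV M
  | ex   : OV M → OV M
  | box  : M → OV M → OV M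
  deriving DecidableEq

namespace OV

variable {M M' : Type}

/-- implication, defined from `¬`, `∧` -/
def imp (φ ψ : OV M) : OV M := .neg (.and φ (.neg ψ))

/-- disjunction -/
def or (φ ψ : OV M) : OV M := .neg (.and (.neg φ) (.neg ψ))

/-- universal quantifier `∀x φ := ¬∃x¬φ` -/
def all (φ : OV M) : OV M := .neg (.ex (.neg φ))

/-- renaming of modal operators -/
def mapOp (f : M → M') : OV M → OV M'
  | atom n => atom n
  | neg φ => neg (mapOp f φ)
  | and φ ψ => and (mapOp f φ) (mapOp f ψ)
  | ex φ => ex (mapOp f φ)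
  | box m φ => box (f m) (mapOp f φ)

/-- uniform substitution of one-variable formulas for the atoms `Pₙ(x)` -/
def subst (σ : ℕ → OV M) : OV M → OV M
  | atom n => σ n
  | neg φ => neg (subst σ φ)
  | and φ ψ => and (subst σ φ) (subst σ ψ)
  | ex φ => ex (subst σ φ)
  | box m φ => box m (subst σ φ)

/-- formulas without modal operators -/
def boxFree : OV M → Prop
  | atom _ => True
  | neg φ => boxFree φ
  | and φ ψ => boxFree φ ∧ boxFree ψ
  | ex φ => boxFree φ
  | box _ _ => False

/-- classical evaluation of a (box-free) one-variable formula in a classical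
first-order structure with domain `D`, interpretation `I`, at element `a` -/
def clEval (D : Type) (I : ℕ → Set D) : OV M → D → Prop
  | atom n, a => a ∈ I n
  | neg φ, a => ¬ clEval D I φ a
  | and φ ψ, a => clEval D I φ a ∧ clEval D I ψ a
  | ex φ, _ => ∃ b : D, clEval D I φ b
  | box _ _, _ => True

end OV

/-- the one-variable fragment of classical first-order logic: box-free
formulas valid in all classical structures -/
def FOone (M : Type) : Set (OV M) :=
  {φ | φ.boxFree ∧ ∀ (D : Type) (I : ℕ → Set D) (a : D), OV.clEval D I φ a}

/-- A one-variable `M`-logic: includes one-variable classical FO and the K-axioms,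
closed under Modus Ponens, Generalisation, Necessitation and Substitution. -/
structure IsOVLogic {M : Type} (L : Set (OV M)) : Prop where
  fo : FOone M ⊆ L
  kax : ∀ (m : M) (n k : ℕ),
    OV.imp (.box m (OV.imp (.atom n) (.atom k)))
      (OV.imp (.box m (.atom n)) (.box m (.atom k))) ∈ L
  mp : ∀ φ ψ, OV.imp φ ψ ∈ L → φ ∈ L → ψ ∈ L
  gen : ∀ φ, φ ∈ L → OV.all φ ∈ L
  nec : ∀ m φ, φ ∈ L → OV.box m φ ∈ L
  subst : ∀ (σ : ℕ → OV M) φ, φ ∈ L → OV.subst σ φ ∈ L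

/-- A Kripke `M`-frame. -/
structure KFrame (M : Type) where
  W : Type
  ne : Nonempty W
  R : M → W → W → Prop

/-- the two domain semantics: expanding (`xd`) and constant (`cd`) domains -/
inductive DSem : Type
  | xd | cd
  deriving DecidableEq

/-- A Kripke model (with expanding domains) based on a frame `F`:
a family of classical structures over subsets of one big domain `D`,
expanding along all accessibility relations. -/
structure KModel {M : Type} (F : KFrame M) where
  D : Type
  dom : F.W → Set D
  domNe : ∀ w, (dom w).Nonempty
  expand : ∀ (m : M) (w v : F.W), F.R m w v → dom w ⊆ dom v
  I : F.W → ℕ → Set D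

namespace KModel

variable {M : Type} {F : KFrame M}

/-- a `d`-model: for `cd`, all the domains coincide (with the common domain) -/
def IsD (𝔪 : KModel F) (d : DSem) : Prop :=
  d = DSem.cd → ∀ w, 𝔪.dom w = Set.univ

/-- truth of a formula at a world under an assignment (value of `x`) -/
def eval (𝔪 : KModel F) : OV M → F.W → 𝔪.D → Prop
  | .atom n, w, a => a ∈ 𝔪.I w n
  | .neg φ, w, a => ¬ 𝔪.eval φ w a
  | .and φ ψ, w, a => 𝔪.eval φ w a ∧ 𝔪.eval ψ w a
  | .ex φ, w, _ => ∃ b ∈ 𝔪.dom w, 𝔪.eval φ w b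
  | .box m φ, w, a => ∀ v, F.R m w v → 𝔪.eval φ v a

/-- `φ` is true at `w` if it holds under every assignment into the domain of `w` -/
def TrueAt (𝔪 : KModel F) (φ : OV M) (w : F.W) : Prop :=
  ∀ a ∈ 𝔪.dom w, 𝔪.eval φ w a

/-- `φ` is true in the model if it is true at every world -/
def TrueIn (𝔪 : KModel F) (φ : OV M) : Prop := ∀ w, 𝔪.TrueAt φ w

/-- a finite model: finitely many worlds, all domains finite -/
def FiniteM (𝔪 : KModel F) : Prop := Finite F.W ∧ ∀ w, (𝔪.dom w).Finite

end KModel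

/-- `Log_d 𝒞`: the formulas true in every `d`-model based on a frame from `𝒞` -/
def LogD {M : Type} (d : DSem) (C : Set (KFrame M)) : Set (OV M) :=
  {φ | ∀ F ∈ C, ∀ 𝔪 : KModel F, 𝔪.IsD d → 𝔪.TrueIn φ}

/-- disjoint union of a family of frames -/
def KFrame.disjUnion {M ι : Type} (hι : Nonempty ι) (Fs : ι → KFrame M) : KFrame M where
  W := Σ i, (Fs i).W
  ne := ⟨⟨Classical.choice hι, Classical.choice (Fs (Classical.choice hι)).ne⟩⟩
  R := fun m a b => ∃ (i : ι) (w v : (Fs i).W), (Fs i).R m w v ∧ a = ⟨i, w⟩ ∧ b = ⟨i, v⟩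

/-- a class of frames closed under (arbitrary) disjoint unions -/
def ClosedDU {M : Type} (C : Set (KFrame M)) : Prop :=
  ∀ (ι : Type) (hι : Nonempty ι) (Fs : ι → KFrame M),
    (∀ i, Fs i ∈ C) → KFrame.disjUnion hι Fs ∈ C

/-- reduct of a frame along a map of modal signatures -/
def KFrame.reduct {M M' : Type} (f : M' → M) (F : KFrame M) : KFrame M' :=
  ⟨F.W, F.ne, fun m => F.R (f m)⟩

/-- fusion `𝒞1 ⊗ 𝒞2` of classes of frames: the frames over a common set of worlds
whose `M1`-reduct is in `𝒞1` and whose `M2`-reduct is in `𝒞2` -/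
def frameFusion {M1 M2 : Type} (C1 : Set (KFrame M1)) (C2 : Set (KFrame M2)) :
    Set (KFrame (M1 ⊕ M2)) :=
  {F | F.reduct Sum.inl ∈ C1 ∧ F.reduct Sum.inr ∈ C2}

/-- fusion `L1 ⊗ L2` of one-variable logics: the smallest one-variable
`(M1 ⊕ M2)`-logic containing (the copies of) `L1` and `L2` -/
def fusion {M1 M2 : Type} (L1 : Set (OV M1)) (L2 : Set (OV M2)) : Set (OV (M1 ⊕ M2)) :=
  ⋂₀ {L | IsOVLogic L ∧ OV.mapOp Sum.inl '' L1 ⊆ L ∧ OV.mapOp Sum.inr '' L2 ⊆ L}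

/-- local derivability from a logic: closure under Modus Ponens and Generalisation -/
inductive Deriv {M : Type} (L : Set (OV M)) : OV M → Prop
  | ax {φ} : φ ∈ L → Deriv L φ
  | mp {φ ψ} : Deriv L (OV.imp φ ψ) → Deriv L φ → Deriv L ψ
  | gen {φ} : Deriv L φ → Deriv L (OV.all φ)

/-- global consequence `φ ⊢*_L ψ`: `ψ` is in the smallest set including `L ∪ {φ}`
closed under Modus Ponens, Generalisation and Necessitation -/
inductive GlobalConseq {M : Type} (L : Set (OV M)) (φ : OV M) : OV M → Prop
  | ax {ψ} : ψ ∈ L → GlobalConseq L φ ψ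
  | prem : GlobalConseq L φ φ
  | mp {ψ χ} : GlobalConseq L φ (OV.imp ψ χ) → GlobalConseq L φ ψ → GlobalConseq L φ χ
  | gen {ψ} : GlobalConseq L φ ψ → GlobalConseq L φ (OV.all ψ)
  | nec (m : M) {ψ} : GlobalConseq L φ ψ → GlobalConseq L φ (OV.box m ψ)

/-- `L` is `d`-complete for `𝒞` -/
def DComplete {M : Type} (d : DSem) (L : Set (OV M)) (C : Set (KFrame M)) : Prop :=
  L = LogD d C

/-- `L` is globally `d`-complete for `𝒞` -/
def GloballyDComplete {M : Type} (d : DSem) (L : Set (OV M)) (C : Set (KFrame M)) : Prop :=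
  ∀ φ ψ, GlobalConseq L φ ψ ↔
    ∀ F ∈ C, ∀ 𝔪 : KModel F, 𝔪.IsD d → 𝔪.TrueIn φ → 𝔪.TrueIn ψ

/-- a non-trivial frame: some `R_□` relates two distinct worlds -/
def KFrame.Nontrivial {M : Type} (F : KFrame M) : Prop :=
  ∃ (m : M) (w v : F.W), w ≠ v ∧ F.R m w v

/-- the fixed Gödel numbering of one-variable formulas (relative to a numbering
`eM` of modal operators) -/
def OV.encode {M : Type} (eM : M → ℕ) : OV M → ℕ
  | .atom n => Nat.pair 0 n
  | .neg φ => Nat.pair 1 (OV.encode eM φ)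
  | .and φ ψ => Nat.pair 2 (Nat.pair (OV.encode eM φ) (OV.encode eM ψ))
  | .ex φ => Nat.pair 3 (OV.encode eM φ)
  | .box m φ => Nat.pair 4 (Nat.pair (eM m) (OV.encode eM φ))

/-- `L` is decidable: membership in `L` is computable w.r.t. the Gödel numbering -/
def DecidableLogic {M : Type} (eM : M → ℕ) (L : Set (OV M)) : Prop :=
  ComputablePred (fun n : ℕ => ∃ φ ∈ L, OV.encode eM φ = n)

/-- `L` is globally decidable: the global consequence relation is computable -/
def GloballyDecidable {M : Type} (eM : M → ℕ) (L : Set (OV M)) : Prop :=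
  ComputablePred (fun p : ℕ × ℕ =>
    ∃ φ ψ, GlobalConseq L φ ψ ∧ OV.encode eM φ = p.1 ∧ OV.encode eM ψ = p.2)

/-- the (local) finite `d`-model property -/
def FMP {M : Type} (d : DSem) (L : Set (OV M)) : Prop :=
  ∀ φ, φ ∉ L → ∃ (F : KFrame M) (𝔪 : KModel F), 𝔪.IsD d ∧ 𝔪.FiniteM ∧
    (∀ χ ∈ L, 𝔪.TrueIn χ) ∧ ∃ w, ¬ 𝔪.TrueAt φ w

/-- the global finite `d`-model property -/
def GlobalFMP {M : Type} (d : DSem) (L : Set (OV M)) : Prop :=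
  ∀ φ ψ, ¬ GlobalConseq L φ ψ →
    ∃ (F : KFrame M) (𝔪 : KModel F), 𝔪.IsD d ∧ 𝔪.FiniteM ∧
      (∀ χ ∈ L, 𝔪.TrueIn χ) ∧ 𝔪.TrueIn φ ∧ ∃ w, ¬ 𝔪.TrueAt ψ w

end OneVarML

/-!
Over one component of the fusion, replace the outermost subformulas `□ φ` with a foreign operator by
fresh atoms: consequences between such surrogates substitute back to consequences of the fusion.
Conversely, consider the world types over the subformulas of `φ` and `ψ`, which record the
types realised in the domain of a world. If `φ` does not entail `ψ` in the fusion, let `S` be the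
set of world types consistent with `φ`; then neither component refutes a member of `S` from
"`φ`, and the world type is in `S`", and the first component does not derive `ψ`.
Each component has, by closure under disjoint unions, a single model of this premise in which all
members of `S` are realised. After multiplying worlds and domain elements, both models have the
same infinite number of copies of every world type and of every type within a world, so worlds and
elements can be matched along bijections; the matched atoms agree with the boxed formulas they stand
for, which makes the glued model a model of `φ` refuting `ψ`. Entailment in the fusion is
therefore decided by searching the finitely many sets `S` with the two component procedures.
-/

namespace OneVarML

variable {M N : Type}

namespace OV

/-! ### Types and surrogates -/

/-- The constant `⊤`. -/
def top : OV M := imp (atom 0) (atom 0)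

instance : Inhabited (OV M) := ⟨top⟩

/-- The disjunction of a list of formulas. -/
def disj (l : List (OV M)) : OV M := l.foldr or (neg top)

/-- The `l`-types: the conjunctions that decide, positively or negatively, every formula of `l`.
They are kept as a list of formulas so that they can be computed. -/
def types (l : List (OV M)) : List (OV M) :=
  l.foldr (fun χ ts => ts.flatMap fun t => [χ.and t, (neg χ).and t]) [top]

/-- The world types over `l`: they decide which `l`-types are realised in the domain of a world. -/
def worldTypes (l : List (OV M)) : List (OV M) := types ((types l).map ex)

/-- The subformulas of a formula, the formula itself included. -/
def subformulas : OV M → List (OV M)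
  | atom n => [atom n]
  | neg φ => neg φ :: subformulas φ
  | and φ ψ => and φ ψ :: (subformulas φ ++ subformulas ψ)
  | ex φ => ex φ :: subformulas φ
  | box m φ => box m φ :: subformulas φ

@[simp]
theorem mem_subformulas_self (φ : OV M) : φ ∈ φ.subformulas := by
  cases φ <;> simp [subformulas]

/-- A propositional valuation: formulas of the form `atom`, `ex` and `box` have arbitrary
truth values. -/
structure IsValuation (V : OV M → Prop) : Prop where
  neg : ∀ φ, V (neg φ) ↔ ¬ V φ
  and : ∀ φ ψ, V (and φ ψ) ↔ V φ ∧ V ψ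

namespace IsValuation

variable {V V' : OV M → Prop}

theorem imp (hV : IsValuation V) (φ ψ : OV M) : V (φ.imp ψ) ↔ (V φ → V ψ) := by
  simp only [OV.imp, hV.neg, hV.and]; tauto

theorem top (hV : IsValuation V) : V top := (hV.imp _ _).2 id

theorem disj (hV : IsValuation V) (l : List (OV M)) : V (disj l) ↔ ∃ χ ∈ l, V χ := by
  induction l with
  | nil => simp [OV.disj, hV.neg, hV.top]
  | cons χ l ih =>
    have : V (OV.disj (χ :: l)) ↔ V χ ∨ V (OV.disj l) := by
      simp only [OV.disj, List.foldr_cons, OV.or, hV.neg, hV.and]; tauto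
    rw [this, ih, List.exists_mem_cons_iff]

theorem exists_mem_types (hV : IsValuation V) (l : List (OV M)) : ∃ t ∈ types l, V t := by
  induction l with
  | nil => exact ⟨_, List.mem_singleton_self _, hV.top⟩
  | cons χ l ih =>
    obtain ⟨t, ht, hVt⟩ := ih
    by_cases hχ : V χ
    · exact ⟨χ.and t, List.mem_flatMap.2 ⟨t, ht, by simp⟩, (hV.and _ _).2 ⟨hχ, hVt⟩⟩
    · exact ⟨χ.neg.and t, List.mem_flatMap.2 ⟨t, ht, by simp⟩,
        (hV.and _ _).2 ⟨(hV.neg _).2 hχ, hVt⟩⟩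

theorem iff_of_mem_types (hV : IsValuation V) (hV' : IsValuation V') {l : List (OV M)} {t : OV M}
    (ht : t ∈ types l) (hVt : V t) (hV't : V' t) : ∀ χ ∈ l, (V χ ↔ V' χ) := by
  induction l generalizing t with
  | nil => simp
  | cons χ l ih =>
    obtain ⟨s, hs, hts⟩ := List.mem_flatMap.1 ht
    simp only [List.mem_cons, List.not_mem_nil, or_false] at hts
    rcases hts with rfl | rfl <;> simp only [hV.and, hV'.and, hV.neg, hV'.neg] at hVt hV't <;>
      exact List.forall_mem_cons.2 ⟨by tauto, ih hs hVt.2 hV't.2⟩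

end IsValuation

theorem disj_map_mapOp (f : M → N) (l : List (OV M)) :
    disj (l.map (mapOp f)) = (disj l).mapOp f := by
  induction l with
  | nil => rfl
  | cons χ l ih => simpa [disj, or, mapOp] using ih

theorem types_map_mapOp (f : M → N) (l : List (OV M)) :
    types (l.map (mapOp f)) = (types l).map (mapOp f) := by
  induction l with
  | nil => rfl
  | cons χ l ih =>
    simp only [types, List.map_cons, List.foldr_cons] at ih ⊢
    rw [ih, List.map_flatMap, List.flatMap_map]
    rfl

theorem worldTypes_map_mapOp (f : M → N) (l : List (OV M)) :
    worldTypes (l.map (mapOp f)) = (worldTypes l).map (mapOp f) := by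
  have : ex ∘ mapOp f = mapOp f ∘ ex (M := M) := rfl
  rw [worldTypes, worldTypes, types_map_mapOp, List.map_map, this, ← List.map_map, types_map_mapOp]

theorem subformulas_mapOp (f : M → N) (φ : OV M) :
    (φ.mapOp f).subformulas = φ.subformulas.map (mapOp f) := by
  induction φ <;> simp_all [subformulas, mapOp]

/-- The surrogate of a formula over a subsignature: `p` partially translates the operators of `M`
into those of `N`, and a formula `□_m φ` whose operator is not translated becomes a fresh atom.
Even atoms stand for the atoms of `M`-formulas, odd ones for the `c`-codes of boxed formulas. -/
def surrogate (p : M → Option N) (c : OV M → ℕ) : OV M → OV N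
  | atom n => atom (2 * n)
  | neg φ => neg (surrogate p c φ)
  | and φ ψ => and (surrogate p c φ) (surrogate p c ψ)
  | ex φ => ex (surrogate p c φ)
  | box m φ => (p m).elim (atom (2 * c (box m φ) + 1)) fun n => box n (surrogate p c φ)

/-- The substitution that recovers a formula from its surrogates. -/
noncomputable def unsurrogate (c : OV M → ℕ) (n : ℕ) : OV M :=
  if Even n then atom (n / 2) else Function.invFun c (n / 2)

theorem unsurrogate_two_mul (c : OV M → ℕ) (n : ℕ) : unsurrogate c (2 * n) = atom n := by
  simp [unsurrogate]

theorem unsurrogate_two_mul_add_one {c : OV M → ℕ} (hc : Function.Injective c) (φ : OV M) :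
    unsurrogate c (2 * c φ + 1) = φ := by
  have hdiv : (2 * c φ + 1) / 2 = c φ := by lia
  rw [unsurrogate, if_neg (Nat.not_even_two_mul_add_one _), hdiv, Function.leftInverse_invFun hc]

theorem subst_mapOp_surrogate {p : M → Option N} {j : N → M} (hp : ∀ m n, p m = some n → j n = m)
    {c : OV M → ℕ} (hc : Function.Injective c) (φ : OV M) :
    ((surrogate p c φ).mapOp j).subst (unsurrogate c) = φ := by
  induction φ with
  | atom n => exact unsurrogate_two_mul c n
  | neg φ ih => simp only [surrogate, mapOp, OV.subst, ih]
  | and φ ψ ihφ ihψ => simp only [surrogate, mapOp, OV.subst, ihφ, ihψ]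
  | ex φ ih => simp only [surrogate, mapOp, OV.subst, ih]
  | box m φ ih =>
    cases hm : p m with
    | none =>
      simp only [surrogate, hm, Option.elim_none, mapOp, OV.subst]
      exact unsurrogate_two_mul_add_one hc _
    | some n => simp only [surrogate, hm, Option.elim_some, mapOp, OV.subst, ih, hp m n hm]

theorem mapOp_surrogate {M' N' : Type} {p : M → Option N} {p' : M' → Option N'} {f : M → M'}
    {g : N → N'} (hp : ∀ m, p' (f m) = (p m).map g) (c : OV M' → ℕ) (φ : OV M) :
    (surrogate p (c ∘ mapOp f) φ).mapOp g = surrogate p' c (φ.mapOp f) := by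
  induction φ with
  | atom n => rfl
  | neg φ ih => simp only [surrogate, mapOp, ih]
  | and φ ψ ihφ ihψ => simp only [surrogate, mapOp, ihφ, ihψ]
  | ex φ ih => simp only [surrogate, mapOp, ih]
  | box m φ ih =>
    cases hm : p m with
    | none => simp [surrogate, mapOp, hp, hm]
    | some n => simp [surrogate, mapOp, hp, hm, ih]

theorem boxFree_of_isEmpty [IsEmpty N] (φ : OV N) : φ.boxFree := by
  induction φ with
  | box m => exact isEmptyElim m
  | _ => simp_all [boxFree]

theorem boxFree_mapOp {f : M → N} {φ : OV M} (hφ : φ.boxFree) : (φ.mapOp f).boxFree := by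
  induction φ <;> simp_all [boxFree, mapOp]

end OV

open OV

/-! ### Derivability -/

/-- A tautology is a substitution instance of its surrogate over the empty signature. -/
theorem IsOVLogic.mem_of_tautology {L : Set (OV M)} (hL : IsOVLogic L) {c : OV M → ℕ}
    (hc : Function.Injective c) {χ : OV M} (hχ : ∀ V, IsValuation V → V χ) : χ ∈ L := by
  let r (χ : OV M) : OV M := (surrogate (N := Empty) (fun _ => none) c χ).mapOp Empty.elim
  have hr : (r χ).subst (unsurrogate c) = χ := subst_mapOp_surrogate (by simp) hc χ
  rw [← hr]
  refine hL.subst _ _ (hL.fo ⟨boxFree_mapOp (boxFree_of_isEmpty _), fun D I a => ?_⟩)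
  exact hχ (fun χ => clEval D I (r χ) a) ⟨fun _ => Iff.rfl, fun _ _ => Iff.rfl⟩

namespace GlobalConseq

variable {L : Set (OV M)} {φ ψ χ : OV M}

theorem of_tautology (hL : IsOVLogic L) {c : OV M → ℕ} (hc : Function.Injective c)
    (Γ : List (OV M)) (hΓ : ∀ γ ∈ Γ, GlobalConseq L φ γ)
    (hχ : ∀ V, IsValuation V → (∀ γ ∈ Γ, V γ) → V χ) : GlobalConseq L φ χ := by
  induction Γ generalizing χ with
  | nil => exact .ax (hL.mem_of_tautology hc fun V hV => hχ V hV (by simp))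
  | cons γ Γ ih =>
    obtain ⟨hγ, hΓ⟩ := List.forall_mem_cons.1 hΓ
    refine .mp (ih hΓ fun V hV hVΓ => (hV.imp γ χ).2 fun hVγ => ?_) hγ
    exact hχ V hV (List.forall_mem_cons.2 ⟨hVγ, hVΓ⟩)

theorem subst (hL : IsOVLogic L) (σ : ℕ → OV M) (h : GlobalConseq L φ ψ) :
    GlobalConseq L (φ.subst σ) (ψ.subst σ) := by
  induction h with
  | ax h => exact .ax (hL.subst _ _ h)
  | prem => exact .prem
  | mp _ _ ih₁ ih₂ => exact .mp ih₁ ih₂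
  | gen _ ih => exact .gen ih
  | nec m _ ih => exact .nec m ih

theorem trans (hφψ : GlobalConseq L φ ψ) (hψχ : GlobalConseq L ψ χ) : GlobalConseq L φ χ := by
  induction hψχ with
  | ax h => exact .ax h
  | prem => exact hφψ
  | mp _ _ ih₁ ih₂ => exact .mp ih₁ ih₂
  | gen _ ih => exact .gen ih
  | nec m _ ih => exact .nec m ih

theorem mapOp {L' : Set (OV N)} {f : M → N} (hL : OV.mapOp f '' L ⊆ L')
    (h : GlobalConseq L φ ψ) : GlobalConseq L' (φ.mapOp f) (ψ.mapOp f) := by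
  induction h with
  | ax h => exact .ax (hL (Set.mem_image_of_mem _ h))
  | prem => exact .prem
  | mp _ _ ih₁ ih₂ => exact .mp ih₁ ih₂
  | gen _ ih => exact .gen ih
  | nec m _ ih => exact .nec (f m) ih

theorem of_surrogate {L' : Set (OV N)} (hL : IsOVLogic L) {p : M → Option N} {j : N → M}
    (hp : ∀ m n, p m = some n → j n = m) (hj : OV.mapOp j '' L' ⊆ L) {c : OV M → ℕ}
    (hc : Function.Injective c) (h : GlobalConseq L' (surrogate p c φ) (surrogate p c ψ)) :
    GlobalConseq L φ ψ := by
  simpa only [subst_mapOp_surrogate hp hc] using (h.mapOp hj).subst hL (unsurrogate c)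

end GlobalConseq

section Fusion

variable {M₁ M₂ : Type} (L₁ : Set (OV M₁)) (L₂ : Set (OV M₂))

theorem isOVLogic_fusion : IsOVLogic (fusion L₁ L₂) where
  fo _ hφ _ hL := hL.1.fo hφ
  kax m n k _ hL := hL.1.kax m n k
  mp φ ψ hφψ hφ L hL := hL.1.mp φ ψ (hφψ L hL) (hφ L hL)
  gen φ hφ L hL := hL.1.gen φ (hφ L hL)
  nec m φ hφ L hL := hL.1.nec m φ (hφ L hL)
  subst σ φ hφ L hL := hL.1.subst σ φ (hφ L hL)

theorem mapOp_inl_image_subset_fusion : mapOp Sum.inl '' L₁ ⊆ fusion L₁ L₂ :=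
  fun _ h _ hL => hL.2.1 h

theorem mapOp_inr_image_subset_fusion : mapOp Sum.inr '' L₂ ⊆ fusion L₁ L₂ :=
  fun _ h _ hL => hL.2.2 h

end Fusion

/-! ### Models -/

namespace KModel

variable {F : KFrame M}

theorem isValuation_eval (𝔪 : KModel F) (w : F.W) (a : 𝔪.D) :
    IsValuation fun φ => 𝔪.eval φ w a :=
  ⟨fun _ => Iff.rfl, fun _ _ => Iff.rfl⟩

theorem trueIn_and {𝔪 : KModel F} {φ ψ : OV M} :
    𝔪.TrueIn (φ.and ψ) ↔ 𝔪.TrueIn φ ∧ 𝔪.TrueIn ψ :=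
  ⟨fun h => ⟨fun w a ha => (h w a ha).1, fun w a ha => (h w a ha).2⟩,
    fun h w a ha => ⟨h.1 w a ha, h.2 w a ha⟩⟩

theorem eval_subst (𝔪 : KModel F) (σ : ℕ → OV M) (φ : OV M) {w : F.W} {a : 𝔪.D}
    (ha : a ∈ 𝔪.dom w) :
    𝔪.eval (φ.subst σ) w a ↔ { 𝔪 with I := fun w n => {a | 𝔪.eval (σ n) w a} }.eval φ w a := by
  induction φ generalizing w a with
  | atom n => rfl
  | neg φ ih => exact not_congr (ih ha)
  | and φ ψ ihφ ihψ => exact and_congr (ihφ ha) (ihψ ha)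
  | ex φ ih => exact exists_congr fun b => and_congr_right fun hb => ih hb
  | box m φ ih => exact forall₂_congr fun v hv => ih (𝔪.expand m w v hv ha)

theorem eval_iff_clEval (𝔪 : KModel F) {φ : OV M} (hφ : φ.boxFree) {w : F.W} (a : 𝔪.dom w) :
    𝔪.eval φ w a ↔ clEval (𝔪.dom w) (fun n => {b | b.1 ∈ 𝔪.I w n}) φ a := by
  induction φ generalizing a with
  | atom n => rfl
  | neg φ ih => exact not_congr (ih hφ a)
  | and φ ψ ihφ ihψ => exact and_congr (ihφ hφ.1 a) (ihψ hφ.2 a)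
  | ex φ ih =>
    refine Iff.trans ?_ (exists_congr fun b => ih hφ b)
    simp only [eval, Subtype.exists, exists_prop]
  | box m φ => exact hφ.elim

end KModel

theorem isOVLogic_logD (d : DSem) (C : Set (KFrame M)) : IsOVLogic (LogD d C) where
  fo := by
    rintro φ ⟨hfree, hφ⟩ F - 𝔪 - w a ha
    exact (𝔪.eval_iff_clEval hfree ⟨a, ha⟩).2 (hφ _ _ _)
  kax m n k F _ 𝔪 _ w a _ := by
    simp only [(𝔪.isValuation_eval w a).imp]
    exact fun hnk hn v hv => ((𝔪.isValuation_eval v a).imp _ _).1 (hnk v hv) (hn v hv)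
  mp φ ψ hφψ hφ F hF 𝔪 hd w a ha :=
    ((𝔪.isValuation_eval w a).imp φ ψ).1 (hφψ F hF 𝔪 hd w a ha) (hφ F hF 𝔪 hd w a ha)
  gen φ hφ F hF 𝔪 hd w a _ := fun ⟨b, hb, hnot⟩ => hnot (hφ F hF 𝔪 hd w b hb)
  nec m φ hφ F hF 𝔪 hd w a ha v hv := hφ F hF 𝔪 hd v a (𝔪.expand m w v hv ha)
  subst σ φ hφ F hF 𝔪 hd w a ha := (𝔪.eval_subst σ φ ha).2 <|
    hφ F hF { 𝔪 with I := fun w n => {a | 𝔪.eval (σ n) w a} } hd w a ha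

theorem GlobalConseq.trueIn {L : Set (OV M)} {F : KFrame M} {𝔪 : KModel F}
    (hL : ∀ χ ∈ L, 𝔪.TrueIn χ) {φ ψ : OV M} (h : GlobalConseq L φ ψ) (hφ : 𝔪.TrueIn φ) :
    𝔪.TrueIn ψ := by
  induction h with
  | ax h => exact hL _ h
  | prem => exact hφ
  | mp _ _ ihφψ ihφ =>
    exact fun w a ha => ((𝔪.isValuation_eval w a).imp _ _).1 (ihφψ w a ha) (ihφ w a ha)
  | gen _ ih => exact fun w a _ ⟨b, hb, hnot⟩ => hnot (ih w b hb)
  | nec m _ ih => exact fun w a ha v hv => ih v a (𝔪.expand m w v hv ha)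

/-! ### Padded models and disjoint unions -/

namespace KModel

section Padding

variable {F : KFrame M} {d : DSem}

/-- A padded `d`-model: in the `xd` semantics every world has an element of the ambient
domain outside its own domain. Thus the set of the worlds' states always has, respectively lacks,
the state of an absent element, and states can be matched between models. -/
def Padded (𝔪 : KModel F) (d : DSem) : Prop :=
  ∀ w, (∃ a, a ∉ 𝔪.dom w) ↔ d = DSem.xd

theorem Padded.isD {𝔪 : KModel F} (h : 𝔪.Padded d) : 𝔪.IsD d := by
  rintro rfl w
  by_contra hw
  exact absurd ((h w).1 ((Set.ne_univ_iff_exists_notMem _).1 hw)) (by decide)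

/-- The model with one more element, which belongs to no domain. -/
def addDead (𝔪 : KModel F) : KModel F where
  D := Option 𝔪.D
  dom w := some '' 𝔪.dom w
  domNe w := (𝔪.domNe w).image _
  expand m w v h := Set.image_mono (𝔪.expand m w v h)
  I w n := some '' 𝔪.I w n

theorem eval_addDead (𝔪 : KModel F) (φ : OV M) (w : F.W) (a : 𝔪.D) :
    𝔪.addDead.eval φ w (some a) ↔ 𝔪.eval φ w a := by
  induction φ generalizing w a with
  | atom n => exact (Option.some_injective _).mem_set_image
  | neg φ ih => exact not_congr (ih w a)
  | and φ ψ ihφ ihψ => exact and_congr (ihφ w a) (ihψ w a)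
  | ex φ ih =>
    refine Set.exists_mem_image.trans (exists_congr fun b => and_congr_right fun _ => ih w b)
  | box m φ ih => exact forall₂_congr fun v _ => ih v a

theorem trueIn_addDead (𝔪 : KModel F) (φ : OV M) : 𝔪.addDead.TrueIn φ ↔ 𝔪.TrueIn φ :=
  forall_congr' fun w => Set.forall_mem_image.trans <|
    forall₂_congr fun a _ => 𝔪.eval_addDead φ w a

theorem IsD.exists_padded {𝔪 : KModel F} (h𝔪 : 𝔪.IsD d) :
    ∃ 𝔫 : KModel F, 𝔫.Padded d ∧ ∀ φ, 𝔫.TrueIn φ ↔ 𝔪.TrueIn φ := by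
  cases d with
  | xd => exact ⟨𝔪.addDead, fun w => ⟨fun _ => rfl, fun _ => ⟨none, fun ⟨_, _, h⟩ => nomatch h⟩⟩,
      𝔪.trueIn_addDead⟩
  | cd => exact ⟨𝔪, fun w => by simp [h𝔪 rfl w], fun _ => Iff.rfl⟩

end Padding

section DisjUnion

variable {ι K : Type} {hι : Nonempty ι} {Fs : ι → KFrame M} {𝔪 : ∀ i, KModel (Fs i)}
  {π : ∀ i, K → (𝔪 i).D} {hπ : ∀ i, Function.Surjective (π i)}

/-- The disjoint union of models, over a common ambient domain `K` covering all of theirs: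
`k : K` stands for the element `π i k` in the `i`-th summand. -/
def disjUnion (hι : Nonempty ι) (𝔪 : ∀ i, KModel (Fs i)) (π : ∀ i, K → (𝔪 i).D)
    (hπ : ∀ i, Function.Surjective (π i)) : KModel (KFrame.disjUnion hι Fs) where
  D := K
  dom x := π x.1 ⁻¹' (𝔪 x.1).dom x.2
  domNe x := ((𝔪 x.1).domNe x.2).preimage (hπ x.1)
  expand := by
    rintro m _ _ ⟨i, w, v, hwv, rfl, rfl⟩
    exact Set.preimage_mono ((𝔪 i).expand m w v hwv)
  I x n := π x.1 ⁻¹' (𝔪 x.1).I x.2 n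

theorem eval_disjUnion (φ : OV M) (i : ι) (w : (Fs i).W) (k : K) :
    (disjUnion hι 𝔪 π hπ).eval φ ⟨i, w⟩ k ↔ (𝔪 i).eval φ w (π i k) := by
  induction φ generalizing w k with
  | atom n => rfl
  | neg φ ih => exact not_congr (ih w k)
  | and φ ψ ihφ ihψ => exact and_congr (ihφ w k) (ihψ w k)
  | ex φ ih =>
    exact (exists_congr fun b => and_congr_right fun _ => ih w b).trans
      ((hπ i).exists (p := fun b => b ∈ (𝔪 i).dom w ∧ (𝔪 i).eval φ w b)).symm
  | box m φ ih =>
    refine ⟨fun h v hv => (ih v k).1 (h ⟨i, v⟩ ⟨i, w, v, hv, rfl, rfl⟩), ?_⟩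
    rintro h _ ⟨j, w, v, hv, ⟨⟩, rfl⟩
    exact (ih v k).2 (h v hv)

theorem trueIn_disjUnion (φ : OV M) :
    (disjUnion hι 𝔪 π hπ).TrueIn φ ↔ ∀ i, (𝔪 i).TrueIn φ := by
  refine Sigma.forall.trans (forall₂_congr fun i w => ?_)
  refine Iff.trans ?_ ((hπ i).forall (p := fun a => a ∈ (𝔪 i).dom w → (𝔪 i).eval φ w a)).symm
  exact forall_congr' fun k => imp_congr_right fun _ => eval_disjUnion φ i w k

theorem padded_disjUnion {d : DSem} (h : ∀ i, (𝔪 i).Padded d) :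
    (disjUnion hι 𝔪 π hπ).Padded d :=
  fun ⟨i, w⟩ => ((hπ i).exists (p := (· ∉ (𝔪 i).dom w))).symm.trans (h i w)

end DisjUnion

end KModel

namespace GloballyDComplete

variable {d : DSem} {L : Set (OV M)} {C : Set (KFrame M)} {θ ψ : OV M}

theorem exists_padded_countermodel (hc : GloballyDComplete d L C) (h : ¬ GlobalConseq L θ ψ) :
    ∃ F ∈ C, ∃ 𝔪 : KModel F, 𝔪.Padded d ∧ 𝔪.TrueIn θ ∧ ¬ 𝔪.TrueIn ψ := by
  rw [hc] at h
  push Not at h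
  obtain ⟨F, hF, 𝔪, h𝔪, hθ, hψ⟩ := h
  obtain ⟨𝔫, h𝔫, h𝔫𝔪⟩ := h𝔪.exists_padded
  exact ⟨F, hF, 𝔫, h𝔫, (h𝔫𝔪 θ).2 hθ, (h𝔫𝔪 ψ).not.2 hψ⟩

/-- The ambient domain of the joint countermodel is the product of the given ones. -/
theorem exists_joint_countermodel (hc : GloballyDComplete d L C) (hdu : ClosedDU C)
    {Ψ : Set (OV M)} (hne : Ψ.Nonempty) (h : ∀ ψ ∈ Ψ, ¬ GlobalConseq L θ ψ) :
    ∃ F ∈ C, ∃ 𝔪 : KModel F, 𝔪.Padded d ∧ 𝔪.TrueIn θ ∧ ∀ ψ ∈ Ψ, ¬ 𝔪.TrueIn ψ := by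
  choose Fs hFs 𝔪 h𝔪 hθ hψ using fun ψ : Ψ => hc.exists_padded_countermodel (h ψ ψ.2)
  have hD (ψ : Ψ) : Nonempty (𝔪 ψ).D := ((𝔪 ψ).domNe (Fs ψ).ne.some).to_type
  refine ⟨_, hdu Ψ hne.to_subtype Fs hFs, .disjUnion _ 𝔪 Function.eval Function.surjective_eval,
    KModel.padded_disjUnion h𝔪, (KModel.trueIn_disjUnion θ).2 hθ, fun ψ hψΨ htrue => ?_⟩
  exact hψ ⟨ψ, hψΨ⟩ ((KModel.trueIn_disjUnion ψ).1 htrue ⟨ψ, hψΨ⟩)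

end GloballyDComplete

/-! ### Matching two families of states -/

section Matching

open Cardinal

universe u

theorem nonempty_equiv_prod_self {K X : Type u} [Infinite K] [Nonempty X] (hX : #X ≤ #K) :
    Nonempty (K ≃ K × X) :=
  Cardinal.eq.1 <| by rw [mk_prod, lift_id, lift_id, mul_eq_left (aleph0_le_mk K) hX (mk_ne_zero X)]

/-- Multiplying by a large set makes all nonempty fibres equinumerous. -/
theorem exists_equiv_prod_of_range_eq {K X X' Y : Type u} [Infinite K] (hX : #X ≤ #K)
    (hX' : #X' ≤ #K) {f : X → Y} {g : X' → Y} (hfg : Set.range f = Set.range g) :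
    ∃ e : K × X ≃ K × X', ∀ x, g (e x).2 = f x.2 := by
  have hfib {Z : Type u} (hZ : #Z ≤ #K) (h : Z → Y) {y : Y} (hy : y ∈ Set.range h) :
      Nonempty ({x : K × Z // h x.2 = y} ≃ K) := by
    have : Nonempty {z // h z = y} := nonempty_subtype.2 hy
    obtain ⟨e⟩ := nonempty_equiv_prod_self ((mk_subtype_le fun z => h z = y).trans hZ)
    exact ⟨((Equiv.prodComm K Z).subtypeEquiv fun _ => Iff.rfl).trans <|
      Equiv.prodSubtypeFstEquivSubtypeProd.trans <| (Equiv.prodComm _ _).trans e.symm⟩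
  have hequiv (y : Y) : Nonempty ({x : K × X // f x.2 = y} ≃ {x : K × X' // g x.2 = y}) := by
    by_cases hy : y ∈ Set.range f
    · exact ⟨(hfib hX f hy).some.trans (hfib hX' g (hfg ▸ hy)).some.symm⟩
    · have : IsEmpty {x : K × X // f x.2 = y} := ⟨fun x => hy ⟨_, x.2⟩⟩
      have : IsEmpty {x : K × X' // g x.2 = y} := ⟨fun x => hy (hfg ▸ ⟨_, x.2⟩)⟩
      exact ⟨Equiv.equivOfIsEmpty _ _⟩
  let e := fun y => (hequiv y).some
  exact ⟨Equiv.ofFiberEquiv e, Equiv.ofFiberEquiv_map e⟩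

variable {V₁ V₂ D₁ D₂ Y : Type u}

theorem exists_comp_equiv_eq {K : Type u} [Infinite K] (hD₁ : #D₁ ≤ #K) (hD₂ : #D₂ ≤ #K)
    {s₁ : V₁ → D₁ → Y} {s₂ : V₂ → D₂ → Y}
    (h : (Set.range fun v => Set.range (s₁ v)) ⊆ Set.range fun v => Set.range (s₂ v)) :
    (Set.range fun x : (K ≃ K × D₁) × V₁ => fun k => s₁ x.2 (x.1 k).2) ⊆
      Set.range fun x : (K ≃ K × D₂) × V₂ => fun k => s₂ x.2 (x.1 k).2 := by
  rintro _ ⟨⟨j, v⟩, rfl⟩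
  obtain ⟨v', hv'⟩ := h ⟨v, rfl⟩
  obtain ⟨e, he⟩ := exists_equiv_prod_of_range_eq hD₁ hD₂ hv'.symm
  exact ⟨⟨j.trans e, v'⟩, funext fun k => he (j k)⟩

/-- Suppose that the same sets of states occur in two families of models. After taking suitably
many copies of each, reindexed over a common domain `K`, the very same functions `K → Y` occur
equally often on both sides. -/
theorem exists_matching [Nonempty D₁] [Nonempty D₂] {s₁ : V₁ → D₁ → Y} {s₂ : V₂ → D₂ → Y}
    (h : (Set.range fun v => Set.range (s₁ v)) = Set.range fun v => Set.range (s₂ v)) :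
    ∃ (K ι₁ ι₂ : Type u) (π₁ : ι₁ → K → D₁) (π₂ : ι₂ → K → D₂) (e : ι₁ × V₁ ≃ ι₂ × V₂),
      Nonempty ι₁ ∧ Nonempty ι₂ ∧ (∀ i, Function.Surjective (π₁ i)) ∧
      (∀ i, Function.Surjective (π₂ i)) ∧
      ∀ x k, s₂ (e x).2 (π₂ (e x).1 k) = s₁ x.2 (π₁ x.1 k) := by
  let K := ULift.{u} ℕ ⊕ D₁ ⊕ D₂
  have hD₁ : #D₁ ≤ #K := mk_le_of_injective (Sum.inr_injective.comp Sum.inl_injective)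
  have hD₂ : #D₂ ≤ #K := mk_le_of_injective (Sum.inr_injective.comp Sum.inr_injective)
  let V₁' := (K ≃ K × D₁) × V₁
  let V₂' := (K ≃ K × D₂) × V₂
  have hrange : (Set.range fun x : V₁' => fun k => s₁ x.2 (x.1 k).2) =
      Set.range fun x : V₂' => fun k => s₂ x.2 (x.1 k).2 :=
    (exists_comp_equiv_eq hD₁ hD₂ h.subset).antisymm (exists_comp_equiv_eq hD₂ hD₁ h.superset)
  let J := ULift.{u} ℕ ⊕ V₁' ⊕ V₂'
  obtain ⟨e, he⟩ := exists_equiv_prod_of_range_eq (K := J)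
    (mk_le_of_injective (Sum.inr_injective.comp Sum.inl_injective))
    (mk_le_of_injective (Sum.inr_injective.comp Sum.inr_injective)) hrange
  refine ⟨K, J × (K ≃ K × D₁), J × (K ≃ K × D₂), fun i k => (i.2 k).2, fun i k => (i.2 k).2,
    (Equiv.prodAssoc _ _ _).trans (e.trans (Equiv.prodAssoc _ _ _).symm), ?_, ?_,
    fun i => Prod.snd_surjective.comp i.2.surjective,
    fun i => Prod.snd_surjective.comp i.2.surjective,
    fun x k => congrFun (he (Equiv.prodAssoc _ _ _ x)) k⟩
  · exact nonempty_prod.2 ⟨inferInstance, nonempty_equiv_prod_self hD₁⟩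
  · exact nonempty_prod.2 ⟨inferInstance, nonempty_equiv_prod_self hD₂⟩

end Matching

/-! ### Amalgamating models of the components -/

namespace KModel

section States

variable {M₁ M₂ N₁ N₂ ι K : Type} {F₁ : KFrame N₁} {F₂ : KFrame N₂} {d : DSem}
  {p₁ : M → Option N₁} {p₂ : M → Option N₂} {c : OV M → ℕ}

/-- The state of `a` at the world `w`: whether `a` is in the domain, and in that case the formulas
of `Θ` whose surrogates `r χ` are true of `a`. All elements outside the domain have the same
state. -/
def state {F : KFrame N₁} (𝔪 : KModel F) (r : OV M → OV N₁) (Θ : List (OV M)) (w : F.W)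
    (a : 𝔪.D) : Prop × Set (OV M) :=
  (a ∈ 𝔪.dom w, {χ | χ ∈ Θ ∧ a ∈ 𝔪.dom w ∧ 𝔪.eval (r χ) w a})

theorem mem_dom_iff_of_state_eq {𝔪₁ : KModel F₁} {𝔪₂ : KModel F₂} {r₁ : OV M → OV N₁}
    {r₂ : OV M → OV N₂} {Θ : List (OV M)} {w₁ : F₁.W} {w₂ : F₂.W} {a₁ : 𝔪₁.D} {a₂ : 𝔪₂.D}
    (h : 𝔪₁.state r₁ Θ w₁ a₁ = 𝔪₂.state r₂ Θ w₂ a₂) : a₁ ∈ 𝔪₁.dom w₁ ↔ a₂ ∈ 𝔪₂.dom w₂ :=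
  Iff.of_eq (congrArg Prod.fst h)

theorem eval_iff_of_state_eq {𝔪₁ : KModel F₁} {𝔪₂ : KModel F₂} {r₁ : OV M → OV N₁}
    {r₂ : OV M → OV N₂} {Θ : List (OV M)} {w₁ : F₁.W} {w₂ : F₂.W} {a₁ : 𝔪₁.D} {a₂ : 𝔪₂.D}
    (h : 𝔪₁.state r₁ Θ w₁ a₁ = 𝔪₂.state r₂ Θ w₂ a₂) {χ : OV M} (hχ : χ ∈ Θ)
    (ha₂ : a₂ ∈ 𝔪₂.dom w₂) : 𝔪₁.eval (r₁ χ) w₁ a₁ ↔ 𝔪₂.eval (r₂ χ) w₂ a₂ := by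
  have hmem := Set.ext_iff.1 (congrArg Prod.snd h) χ
  have ha₁ := (mem_dom_iff_of_state_eq h).2 ha₂
  simpa only [state, Set.mem_ofPred_eq, hχ, ha₁, ha₂, true_and] using hmem

theorem isValuation_eval_surrogate (𝔪 : KModel F₁) (p : M → Option N₁) (c : OV M → ℕ) (w : F₁.W)
    (a : 𝔪.D) : IsValuation fun χ => 𝔪.eval (surrogate p c χ) w a :=
  ⟨fun _ => Iff.rfl, fun _ _ => Iff.rfl⟩

theorem range_state_subset {𝔪₁ : KModel F₁} {𝔪₂ : KModel F₂} (h₁ : 𝔪₁.Padded d)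
    (h₂ : 𝔪₂.Padded d) {Θ : List (OV M)} {q : OV M} (hq : q ∈ worldTypes Θ) {w₁ : F₁.W}
    {w₂ : F₂.W} {a₁ : 𝔪₁.D} {a₂ : 𝔪₂.D} (hq₁ : 𝔪₁.eval (surrogate p₁ c q) w₁ a₁)
    (hq₂ : 𝔪₂.eval (surrogate p₂ c q) w₂ a₂) :
    Set.range (𝔪₁.state (surrogate p₁ c) Θ w₁) ⊆ Set.range (𝔪₂.state (surrogate p₂ c) Θ w₂) := by
  rintro _ ⟨b, rfl⟩
  by_cases hb : b ∈ 𝔪₁.dom w₁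
  · obtain ⟨t, ht, hbt⟩ := (𝔪₁.isValuation_eval_surrogate p₁ c w₁ b).exists_mem_types Θ
    have hex := (𝔪₁.isValuation_eval_surrogate p₁ c w₁ a₁).iff_of_mem_types
      (𝔪₂.isValuation_eval_surrogate p₂ c w₂ a₂) hq hq₁ hq₂ t.ex (List.mem_map_of_mem ht)
    obtain ⟨b', hb', hbt'⟩ := hex.1 ⟨b, hb, hbt⟩
    have hiff := (𝔪₁.isValuation_eval_surrogate p₁ c w₁ b).iff_of_mem_types
      (𝔪₂.isValuation_eval_surrogate p₂ c w₂ b') ht hbt hbt'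
    refine ⟨b', Prod.ext (propext (iff_of_true hb' hb)) (Set.ext fun χ => ?_)⟩
    exact and_congr_right fun hχ => and_congr (iff_of_true hb' hb) (hiff χ hχ).symm
  · obtain ⟨b', hb'⟩ := (h₂ w₂).2 ((h₁ w₁).1 ⟨b, hb⟩)
    exact ⟨b', by simp [state, hb, hb']⟩

theorem range_range_state_subset {𝔪₁ : KModel F₁} {𝔪₂ : KModel F₂} (h₁ : 𝔪₁.Padded d)
    (h₂ : 𝔪₂.Padded d) {Θ S : List (OV M)} (hS : S ⊆ worldTypes Θ)
    (hS₁ : 𝔪₁.TrueIn (surrogate p₁ c (disj S)))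
    (hS₂ : ∀ q ∈ S, ¬ 𝔪₂.TrueIn (surrogate p₂ c q.neg)) :
    (Set.range fun w => Set.range (𝔪₁.state (surrogate p₁ c) Θ w)) ⊆
      Set.range fun w => Set.range (𝔪₂.state (surrogate p₂ c) Θ w) := by
  rintro _ ⟨w₁, rfl⟩
  obtain ⟨a₁, ha₁⟩ := 𝔪₁.domNe w₁
  obtain ⟨q, hq, hq₁⟩ := ((𝔪₁.isValuation_eval_surrogate p₁ c w₁ a₁).disj S).1 (hS₁ w₁ a₁ ha₁)
  have hq₂ := hS₂ q hq
  simp only [TrueIn, TrueAt, surrogate, eval] at hq₂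
  push Not at hq₂
  obtain ⟨w₂, a₂, -, hq₂⟩ := hq₂
  exact ⟨w₂, (range_state_subset h₂ h₁ (hS hq) hq₂ hq₁).antisymm
    (range_state_subset h₁ h₂ (hS hq) hq₁ hq₂)⟩

theorem state_disjUnion {hι : Nonempty ι} (𝔪 : KModel F₁) {π : ι → K → 𝔪.D}
    (hπ : ∀ i, Function.Surjective (π i)) (r : OV M → OV N₁) (Θ : List (OV M)) (i : ι) (w : F₁.W)
    (k : K) :
    (disjUnion hι (fun _ => 𝔪) π hπ).state r Θ ⟨i, w⟩ k = 𝔪.state r Θ w (π i k) :=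
  Prod.ext rfl <| Set.ext fun χ =>
    and_congr_right fun _ => and_congr_right fun _ =>
      eval_disjUnion (𝔪 := fun _ => 𝔪) (hπ := hπ) (r χ) i w k

theorem exists_equiv_state_eq {C₁ : Set (KFrame N₁)} {C₂ : Set (KFrame N₂)} (hdu₁ : ClosedDU C₁)
    (hdu₂ : ClosedDU C₂) (hF₁ : F₁ ∈ C₁) (hF₂ : F₂ ∈ C₂) (𝔪₁ : KModel F₁) (𝔪₂ : KModel F₂)
    (h₁ : 𝔪₁.Padded d) {r₁ : OV M → OV N₁} {r₂ : OV M → OV N₂} {Θ : List (OV M)}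
    (h : (Set.range fun w => Set.range (𝔪₁.state r₁ Θ w)) =
      Set.range fun w => Set.range (𝔪₂.state r₂ Θ w)) :
    ∃ G₁ ∈ C₁, ∃ G₂ ∈ C₂, ∃ (𝔫₁ : KModel G₁) (𝔫₂ : KModel G₂) (e : G₁.W ≃ G₂.W)
      (f : 𝔫₁.D → 𝔫₂.D), 𝔫₁.IsD d ∧ (∀ φ, 𝔫₁.TrueIn φ ↔ 𝔪₁.TrueIn φ) ∧
      ∀ w a, 𝔫₂.state r₂ Θ (e w) (f a) = 𝔫₁.state r₁ Θ w a := by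
  have : Nonempty 𝔪₁.D := (𝔪₁.domNe F₁.ne.some).to_type
  have : Nonempty 𝔪₂.D := (𝔪₂.domNe F₂.ne.some).to_type
  obtain ⟨K, ι₁, ι₂, π₁, π₂, e, hι₁, hι₂, hπ₁, hπ₂, he⟩ := exists_matching h
  let 𝔫₁ := disjUnion hι₁ (fun _ => 𝔪₁) π₁ hπ₁
  let 𝔫₂ := disjUnion hι₂ (fun _ => 𝔪₂) π₂ hπ₂
  have hstate₂ (x : ι₂ × F₂.W) (k : K) :
      𝔫₂.state r₂ Θ ((Equiv.sigmaEquivProd ι₂ F₂.W).symm x) k = 𝔪₂.state r₂ Θ x.2 (π₂ x.1 k) :=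
    state_disjUnion 𝔪₂ hπ₂ r₂ Θ x.1 x.2 k
  refine ⟨_, hdu₁ ι₁ hι₁ _ fun _ => hF₁, _, hdu₂ ι₂ hι₂ _ fun _ => hF₂, 𝔫₁, 𝔫₂,
    (Equiv.sigmaEquivProd ι₁ F₁.W).trans (e.trans (Equiv.sigmaEquivProd ι₂ F₂.W).symm), id,
    (padded_disjUnion fun _ => h₁).isD,
    fun φ => (trueIn_disjUnion φ).trans (forall_const ι₁), fun ⟨i, w⟩ k => ?_⟩
  calc _ = 𝔪₂.state r₂ Θ (e (i, w)).2 (π₂ (e (i, w)).1 k) := hstate₂ (e (i, w)) k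
    _ = 𝔪₁.state r₁ Θ w (π₁ i k) := he (i, w) k
    _ = 𝔫₁.state r₁ Θ ⟨i, w⟩ k := (state_disjUnion 𝔪₁ hπ₁ r₁ Θ i w k).symm

end States

end KModel

section Fuse

variable {M₁ M₂ : Type} {G₁ : KFrame M₁} {G₂ : KFrame M₂}

/-- The fused frame of two frames whose worlds are identified along `e`. -/
def KFrame.fuse (G₁ : KFrame M₁) (G₂ : KFrame M₂) (e : G₁.W ≃ G₂.W) : KFrame (M₁ ⊕ M₂) where
  W := G₁.W
  ne := G₁.ne
  R
    | .inl m, w, v => G₁.R m w v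
    | .inr m, w, v => G₂.R m (e w) (e v)

namespace KModel

/-- The fused model of two models whose worlds and domains are identified. An atom `Pₙ` is
interpreted through its surrogate `P₂ₙ`. -/
def fuse (𝔪₁ : KModel G₁) (𝔪₂ : KModel G₂) (e : G₁.W ≃ G₂.W) (f : 𝔪₁.D → 𝔪₂.D)
    (hdom : ∀ w a, f a ∈ 𝔪₂.dom (e w) ↔ a ∈ 𝔪₁.dom w) : KModel (G₁.fuse G₂ e) where
  D := 𝔪₁.D
  dom := 𝔪₁.dom
  domNe := 𝔪₁.domNe
  expand
    | .inl m, w, v, hwv => 𝔪₁.expand m w v hwv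
    | .inr m, w, v, hwv => fun a ha =>
      (hdom v a).1 (𝔪₂.expand m (e w) (e v) hwv ((hdom w a).2 ha))
  I w n := 𝔪₁.I w (2 * n)

variable {𝔪₁ : KModel G₁} {𝔪₂ : KModel G₂} {e : G₁.W ≃ G₂.W} {f : 𝔪₁.D → 𝔪₂.D}
  {hdom : ∀ w a, f a ∈ 𝔪₂.dom (e w) ↔ a ∈ 𝔪₁.dom w} {c : OV (M₁ ⊕ M₂) → ℕ}

/-- The two surrogates of `χ` may be used interchangeably, so that a modal operator is evaluated
in the component to which it belongs. -/
theorem eval_fuse (χ : OV (M₁ ⊕ M₂))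
    (h : ∀ η ∈ χ.subformulas, ∀ w, ∀ a ∈ 𝔪₁.dom w,
      (𝔪₂.eval (surrogate Sum.getRight? c η) (e w) (f a) ↔
        𝔪₁.eval (surrogate Sum.getLeft? c η) w a))
    {w : G₁.W} {a : 𝔪₁.D} (ha : a ∈ 𝔪₁.dom w) :
    (fuse 𝔪₁ 𝔪₂ e f hdom).eval χ w a ↔ 𝔪₁.eval (surrogate Sum.getLeft? c χ) w a := by
  induction χ generalizing w a with
  | atom n => rfl
  | neg χ ih => exact not_congr (ih (fun η hη => h η (by simp [subformulas, hη])) ha)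
  | and χ χ' ihχ ihχ' =>
    exact and_congr (ihχ (fun η hη => h η (by simp [subformulas, hη])) ha)
      (ihχ' (fun η hη => h η (by simp [subformulas, hη])) ha)
  | ex χ ih =>
    exact exists_congr fun b => and_congr_right fun hb =>
      ih (fun η hη => h η (by simp [subformulas, hη])) hb
  | box m χ ih =>
    have hχ (η) (hη : η ∈ χ.subformulas) := h η (by simp [subformulas, hη])
    have hexpand {v} (hv : (G₁.fuse G₂ e).R m w v) : a ∈ 𝔪₁.dom v :=
      (fuse 𝔪₁ 𝔪₂ e f hdom).expand m w v hv ha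
    cases m with
    | inl m => exact forall₂_congr fun v hv => ih hχ (hexpand hv)
    | inr m =>
      calc (fuse 𝔪₁ 𝔪₂ e f hdom).eval (box (.inr m) χ) w a
        _ ↔ ∀ v, G₂.R m (e w) (e v) → 𝔪₂.eval (surrogate Sum.getRight? c χ) (e v) (f a) :=
          forall₂_congr fun v hv => (ih hχ (hexpand hv)).trans
            (hχ χ (mem_subformulas_self χ) v a (hexpand hv)).symm
        _ ↔ 𝔪₂.eval (surrogate Sum.getRight? c (box (.inr m) χ)) (e w) (f a) :=
          e.forall_congr_right (q := fun v =>
            G₂.R m (e w) v → 𝔪₂.eval (surrogate Sum.getRight? c χ) v (f a))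
        _ ↔ _ := h _ (mem_subformulas_self _) w a ha

theorem trueIn_fuse (χ : OV (M₁ ⊕ M₂))
    (h : ∀ η ∈ χ.subformulas, ∀ w, ∀ a ∈ 𝔪₁.dom w,
      (𝔪₂.eval (surrogate Sum.getRight? c η) (e w) (f a) ↔
        𝔪₁.eval (surrogate Sum.getLeft? c η) w a)) :
    (fuse 𝔪₁ 𝔪₂ e f hdom).TrueIn χ ↔ 𝔪₁.TrueIn (surrogate Sum.getLeft? c χ) :=
  forall_congr' fun _ => forall₂_congr fun _ ha => eval_fuse χ h ha

end KModel

end Fuse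

section Transport

variable {F : KFrame M} {G : KFrame N} {j : N → M} {e : F.W ≃ G.W}

/-- The model induced on a frame isomorphic to a reduct of the given one. -/
def KModel.transport (𝔪 : KModel F) (j : N → M) (e : F.W ≃ G.W)
    (he : ∀ m w v, G.R m (e w) (e v) ↔ F.R (j m) w v) : KModel G where
  D := 𝔪.D
  dom w := 𝔪.dom (e.symm w)
  domNe w := 𝔪.domNe (e.symm w)
  expand m w v hwv := 𝔪.expand (j m) _ _ <| (he m _ _).1 <| by
    rwa [e.apply_symm_apply, e.apply_symm_apply]
  I w := 𝔪.I (e.symm w)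

theorem KModel.mem_dom_transport (𝔪 : KModel F)
    (he : ∀ m w v, G.R m (e w) (e v) ↔ F.R (j m) w v) (w : F.W) (a : 𝔪.D) :
    a ∈ (𝔪.transport j e he).dom (e w) ↔ a ∈ 𝔪.dom w :=
  Iff.of_eq (congrArg (fun v => a ∈ 𝔪.dom v) (e.symm_apply_apply w))

theorem KModel.eval_transport (𝔪 : KModel F) (he : ∀ m w v, G.R m (e w) (e v) ↔ F.R (j m) w v)
    (φ : OV N) (w : F.W) (a : 𝔪.D) :
    (𝔪.transport j e he).eval φ (e w) a ↔ 𝔪.eval (φ.mapOp j) w a := by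
  induction φ generalizing w a with
  | atom n => exact Iff.of_eq (congrArg (fun v => a ∈ 𝔪.I v n) (e.symm_apply_apply w))
  | neg φ ih => exact not_congr (ih w a)
  | and φ ψ ihφ ihψ => exact and_congr (ihφ w a) (ihψ w a)
  | ex φ ih =>
    exact exists_congr fun b => and_congr (𝔪.mem_dom_transport he w b) (ih w b)
  | box m φ ih =>
    refine (e.forall_congr_right
      (q := fun v => G.R m (e w) v → (𝔪.transport j e he).eval φ v a)).symm.trans ?_
    exact forall_congr' fun v => imp_congr (he m w v) (ih v a)

theorem GloballyDComplete.mapOp_image_subset_logD {d : DSem} {L : Set (OV N)} {C : Set (KFrame N)}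
    (hc : GloballyDComplete d L C) (hG : G ∈ C)
    (he : ∀ m w v, G.R m (e w) (e v) ↔ F.R (j m) w v) : mapOp j '' L ⊆ LogD d {F} := by
  rintro _ ⟨φ, hφ, rfl⟩ _ rfl 𝔪 hd w a ha
  exact (𝔪.eval_transport he φ w a).1 <| (hc top φ).1 (.ax hφ) G hG (𝔪.transport j e he)
    (fun hcd w => hd hcd _) (fun w a _ => (KModel.isValuation_eval _ w a).top) (e w) a
    ((𝔪.mem_dom_transport he w a).2 ha)

end Transport

/-! ### Certificates -/

section Certificate

variable {M₁ M₂ N₁ N₂ : Type}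

/-- A certificate that `φ` does not entail `ψ`: a list `S` of world types to be realised in a model
of `φ`. It is checked through the surrogates `r₁`, `r₂` and consequence relations `G₁`, `G₂`
of the components: with `θ` saying that `φ` holds and that the world type is in `S`, the first
component does not derive `ψ` from `θ` and neither component excludes a member of `S`. -/
structure IsCertificate (r₁ : OV M → OV N₁) (r₂ : OV M → OV N₂) (G₁ : OV N₁ → OV N₁ → Prop)
    (G₂ : OV N₂ → OV N₂ → Prop) (φ ψ : OV M) (S : List (OV M)) : Prop where
  refutes : ¬ G₁ (r₁ (φ.and (disj S))) (r₁ ψ)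
  realizes₁ : ∀ q ∈ S, ¬ G₁ (r₁ (φ.and (disj S))) (r₁ q.neg)
  realizes₂ : ∀ q ∈ S, ¬ G₂ (r₂ (φ.and (disj S))) (r₂ q.neg)

theorem isCertificate_iff {r₁ : OV M → OV N₁} {r₂ : OV M → OV N₂} {G₁ : OV N₁ → OV N₁ → Prop}
    {G₂ : OV N₂ → OV N₂ → Prop} {φ ψ : OV M} {S : List (OV M)} :
    IsCertificate r₁ r₂ G₁ G₂ φ ψ S ↔
      ¬ G₁ (r₁ (φ.and (disj S))) (r₁ ψ) ∧
      (∀ q ∈ S, ¬ G₁ (r₁ (φ.and (disj S))) (r₁ q.neg)) ∧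
      ∀ q ∈ S, ¬ G₂ (r₂ (φ.and (disj S))) (r₂ q.neg) :=
  ⟨fun ⟨h, h₁, h₂⟩ => ⟨h, h₁, h₂⟩, fun ⟨h, h₁, h₂⟩ => ⟨h, h₁, h₂⟩⟩

variable {L₁ : Set (OV M₁)} {L₂ : Set (OV M₂)} {c : OV (M₁ ⊕ M₂) → ℕ} {φ ψ : OV (M₁ ⊕ M₂)}

/-- The certificate consists of the world types over `Θ` that are consistent with `φ`. -/
theorem exists_isCertificate (hc : Function.Injective c) (h : ¬ GlobalConseq (fusion L₁ L₂) φ ψ)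
    (Θ : List (OV (M₁ ⊕ M₂))) :
    ∃ S ∈ (worldTypes Θ).sublists',
      IsCertificate (surrogate Sum.getLeft? c) (surrogate Sum.getRight? c)
        (GlobalConseq L₁) (GlobalConseq L₂) φ ψ S := by
  classical
  have hL := isOVLogic_fusion L₁ L₂
  let S := (worldTypes Θ).filter fun q => ¬ GlobalConseq (fusion L₁ L₂) φ q.neg
  have hS {q} : q ∈ S ↔ q ∈ worldTypes Θ ∧ ¬ GlobalConseq (fusion L₁ L₂) φ q.neg := by
    simp only [S, List.mem_filter, decide_eq_true_eq]
  have hφS : GlobalConseq (fusion L₁ L₂) φ (φ.and (disj S)) := by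
    let Γ := (worldTypes Θ).filter fun q => GlobalConseq (fusion L₁ L₂) φ q.neg
    refine .of_tautology hL hc (φ :: Γ.map neg) ?_ fun V hV hVΓ => ?_
    · refine List.forall_mem_cons.2 ⟨.prem, List.forall_mem_map.2 fun q hq => ?_⟩
      exact of_decide_eq_true (List.mem_filter.1 hq).2
    · obtain ⟨q, hq, hVq⟩ := hV.exists_mem_types ((types Θ).map ex)
      refine (hV.and _ _).2 ⟨hVΓ _ (by simp), (hV.disj S).2 ⟨q, hS.2 ⟨hq, fun hqφ => ?_⟩, hVq⟩⟩
      exact (hV.neg q).1 (hVΓ _ (by simp [Γ, hqφ, worldTypes, hq])) hVq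
  have hlift₁ {χ} (hχ : GlobalConseq L₁ (surrogate Sum.getLeft? c (φ.and (disj S)))
      (surrogate Sum.getLeft? c χ)) : GlobalConseq (fusion L₁ L₂) φ χ :=
    hφS.trans (hχ.of_surrogate hL (j := Sum.inl) (by simp [eq_comm])
      (mapOp_inl_image_subset_fusion L₁ L₂) hc)
  have hlift₂ {χ} (hχ : GlobalConseq L₂ (surrogate Sum.getRight? c (φ.and (disj S)))
      (surrogate Sum.getRight? c χ)) : GlobalConseq (fusion L₁ L₂) φ χ :=
    hφS.trans (hχ.of_surrogate hL (j := Sum.inr) (by simp [eq_comm])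
      (mapOp_inr_image_subset_fusion L₁ L₂) hc)
  exact ⟨S, List.mem_sublists'.2 List.filter_sublist, fun hψ => h (hlift₁ hψ),
    fun q hq hnq => (hS.1 hq).2 (hlift₁ hnq), fun q hq hnq => (hS.1 hq).2 (hlift₂ hnq)⟩

variable {d : DSem} {C₁ : Set (KFrame M₁)} {C₂ : Set (KFrame M₂)}

theorem fusion_subset_logD_fuse (hc₁ : GloballyDComplete d L₁ C₁) (hc₂ : GloballyDComplete d L₂ C₂)
    {G₁ : KFrame M₁} {G₂ : KFrame M₂} (hG₁ : G₁ ∈ C₁) (hG₂ : G₂ ∈ C₂) (e : G₁.W ≃ G₂.W) :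
    fusion L₁ L₂ ⊆ LogD d {G₁.fuse G₂ e} :=
  Set.sInter_subset_of_mem ⟨isOVLogic_logD d _,
    hc₁.mapOp_image_subset_logD hG₁ (F := G₁.fuse G₂ e) (j := Sum.inl)
      (e := Equiv.refl G₁.W) fun _ _ _ => Iff.rfl,
    hc₂.mapOp_image_subset_logD hG₂ (F := G₁.fuse G₂ e) (j := Sum.inr)
      (e := e) fun _ _ _ => Iff.rfl⟩

theorem IsCertificate.exists_components (hc₁ : GloballyDComplete d L₁ C₁)
    (hc₂ : GloballyDComplete d L₂ C₂) (hdu₁ : ClosedDU C₁) (hdu₂ : ClosedDU C₂)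
    {p₁ : M → Option M₁} {p₂ : M → Option M₂} {c : OV M → ℕ} {φ ψ : OV M} {Θ S : List (OV M)}
    (hSΘ : S ⊆ worldTypes Θ)
    (hS : IsCertificate (surrogate p₁ c) (surrogate p₂ c) (GlobalConseq L₁) (GlobalConseq L₂)
      φ ψ S) :
    ∃ F₁ ∈ C₁, ∃ F₂ ∈ C₂, ∃ (𝔪₁ : KModel F₁) (𝔪₂ : KModel F₂), 𝔪₁.Padded d ∧
      𝔪₁.TrueIn (surrogate p₁ c φ) ∧ ¬ 𝔪₁.TrueIn (surrogate p₁ c ψ) ∧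
      (Set.range fun w => Set.range (𝔪₁.state (surrogate p₁ c) Θ w)) =
        Set.range fun w => Set.range (𝔪₂.state (surrogate p₂ c) Θ w) := by
  obtain ⟨F₁, hF₁, 𝔪₁, h𝔪₁, hθ₁, hΨ₁⟩ := hc₁.exists_joint_countermodel hdu₁
    (θ := surrogate p₁ c (φ.and (disj S)))
    (Ψ := insert (surrogate p₁ c ψ) ((fun q => surrogate p₁ c q.neg) '' {q | q ∈ S}))
    (Set.insert_nonempty _ _)
    (by rintro _ (rfl | ⟨q, hq, rfl⟩); exacts [hS.refutes, hS.realizes₁ q hq])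
  obtain ⟨hφ, hdisj₁⟩ := KModel.trueIn_and.1 hθ₁
  obtain ⟨q, hq⟩ : ∃ q, q ∈ S := by
    obtain ⟨a, ha⟩ := 𝔪₁.domNe F₁.ne.some
    have hdisj := ((𝔪₁.isValuation_eval_surrogate p₁ c _ a).disj S).1 (hdisj₁ _ a ha)
    exact hdisj.imp fun _ => And.left
  obtain ⟨F₂, hF₂, 𝔪₂, h𝔪₂, hθ₂, hΨ₂⟩ := hc₂.exists_joint_countermodel hdu₂
    (θ := surrogate p₂ c (φ.and (disj S)))
    (Ψ := (fun q => surrogate p₂ c q.neg) '' {q | q ∈ S}) ⟨_, q, hq, rfl⟩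
    (by rintro _ ⟨q, hq, rfl⟩; exact hS.realizes₂ q hq)
  refine ⟨F₁, hF₁, F₂, hF₂, 𝔪₁, 𝔪₂, h𝔪₁, hφ, hΨ₁ _ (Set.mem_insert _ _),
    Set.Subset.antisymm ?_ ?_⟩
  · exact KModel.range_range_state_subset h𝔪₁ h𝔪₂ hSΘ hdisj₁ fun q hq => hΨ₂ _ ⟨q, hq, rfl⟩
  · exact KModel.range_range_state_subset h𝔪₂ h𝔪₁ hSΘ (KModel.trueIn_and.1 hθ₂).2
      fun q hq => hΨ₁ _ (Set.mem_insert_of_mem _ ⟨q, hq, rfl⟩)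

theorem IsCertificate.not_globalConseq (hc₁ : GloballyDComplete d L₁ C₁)
    (hc₂ : GloballyDComplete d L₂ C₂) (hdu₁ : ClosedDU C₁) (hdu₂ : ClosedDU C₂)
    {Θ S : List (OV (M₁ ⊕ M₂))} (hφ : φ.subformulas ⊆ Θ) (hψ : ψ.subformulas ⊆ Θ)
    (hSΘ : S ⊆ worldTypes Θ)
    (hS : IsCertificate (surrogate Sum.getLeft? c) (surrogate Sum.getRight? c)
      (GlobalConseq L₁) (GlobalConseq L₂) φ ψ S) :
    ¬ GlobalConseq (fusion L₁ L₂) φ ψ := by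
  obtain ⟨F₁, hF₁, F₂, hF₂, 𝔪₁, 𝔪₂, h𝔪₁, hφ₁, hψ₁, hrange⟩ :=
    hS.exists_components hc₁ hc₂ hdu₁ hdu₂ hSΘ
  obtain ⟨G₁, hG₁, G₂, hG₂, 𝔫₁, 𝔫₂, e, f, h𝔫₁, htrue, hstate⟩ :=
    KModel.exists_equiv_state_eq hdu₁ hdu₂ hF₁ hF₂ 𝔪₁ 𝔪₂ h𝔪₁ hrange
  have hdom (w a) : f a ∈ 𝔫₂.dom (e w) ↔ a ∈ 𝔫₁.dom w :=
    KModel.mem_dom_iff_of_state_eq (hstate w a)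
  let 𝔫 := KModel.fuse 𝔫₁ 𝔫₂ e f hdom
  have h𝔫 {χ} (hχ : χ.subformulas ⊆ Θ) : 𝔫.TrueIn χ ↔ 𝔪₁.TrueIn (surrogate Sum.getLeft? c χ) :=
    (KModel.trueIn_fuse χ fun η hη w a =>
      KModel.eval_iff_of_state_eq (hstate w a) (hχ hη)).trans (htrue _)
  have hval : ∀ χ ∈ fusion L₁ L₂, 𝔫.TrueIn χ := fun χ hχ =>
    fusion_subset_logD_fuse hc₁ hc₂ hG₁ hG₂ e hχ _ rfl 𝔫 h𝔫₁
  exact fun h => hψ₁ ((h𝔫 hψ).1 (h.trueIn hval ((h𝔫 hφ).2 hφ₁)))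

theorem not_globalConseq_fusion_iff (hc₁ : GloballyDComplete d L₁ C₁)
    (hc₂ : GloballyDComplete d L₂ C₂) (hdu₁ : ClosedDU C₁) (hdu₂ : ClosedDU C₂)
    (hc : Function.Injective c) :
    ¬ GlobalConseq (fusion L₁ L₂) φ ψ ↔
      ∃ S ∈ (worldTypes (φ.subformulas ++ ψ.subformulas)).sublists',
        IsCertificate (surrogate Sum.getLeft? c) (surrogate Sum.getRight? c)
          (GlobalConseq L₁) (GlobalConseq L₂) φ ψ S :=
  ⟨fun h => exists_isCertificate hc h _, fun ⟨_, hSΘ, hS⟩ =>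
    hS.not_globalConseq hc₁ hc₂ hdu₁ hdu₂ (List.subset_append_left _ _)
      (List.subset_append_right _ _) (List.mem_sublists'.1 hSΘ).subset⟩

end Certificate

/-! ### Computability of the syntax -/

section Encoding

open Encodable

theorem OV.encode_injective {e : M → ℕ} (he : Function.Injective e) :
    Function.Injective (OV.encode e) := by
  intro φ
  induction φ with
  | atom n => intro ψ h; cases ψ <;> simp_all [OV.encode]
  | neg φ ih =>
    intro ψ h
    cases ψ with
    | neg ψ => rw [@ih ψ (by simpa [OV.encode] using h)]
    | _ => simp [OV.encode] at h
  | and φ φ' ih ih' =>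
    intro ψ h
    cases ψ with
    | and ψ ψ' =>
      obtain ⟨h, h'⟩ : φ.encode e = ψ.encode e ∧ φ'.encode e = ψ'.encode e := by
        simpa [OV.encode] using h
      rw [ih h, ih' h']
    | _ => simp [OV.encode] at h
  | ex φ ih =>
    intro ψ h
    cases ψ with
    | ex ψ => rw [@ih ψ (by simpa [OV.encode] using h)]
    | _ => simp [OV.encode] at h
  | box m φ ih =>
    intro ψ h
    cases ψ with
    | box m' ψ =>
      obtain ⟨hm, h⟩ : e m = e m' ∧ φ.encode e = ψ.encode e := by simpa [OV.encode] using h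
      rw [he hm, ih h]
    | _ => simp [OV.encode] at h

/-- Formulas over the signature `ℕ` are encoded by their Gödel numbers. -/
noncomputable instance : Encodable (OV ℕ) where
  encode := OV.encode id
  decode := Function.partialInv (OV.encode id)
  encodek := Function.partialInv_left (OV.encode_injective Function.injective_id)

namespace OV

theorem encode_eq_encode_mapOp (e : M → ℕ) (φ : OV M) :
    OV.encode e φ = Encodable.encode (φ.mapOp e) := by
  change _ = OV.encode id (φ.mapOp e)
  induction φ <;> simp_all [OV.encode, mapOp]

theorem mapOp_injective {e : M → ℕ} (he : Function.Injective e) :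
    Function.Injective (mapOp e) := fun φ ψ h =>
  encode_injective he (by rw [encode_eq_encode_mapOp, h, encode_eq_encode_mapOp])

theorem decode_eq_some_iff {n : ℕ} {φ : OV ℕ} : decode n = some φ ↔ OV.encode id φ = n :=
  (encode_injective Function.injective_id).isPartialInv φ n

theorem decode_atom (k : ℕ) : decode (Nat.pair 0 k) = some (atom (M := ℕ) k) :=
  decode_eq_some_iff.2 rfl

theorem decode_neg (x : ℕ) : decode (Nat.pair 1 x) = (decode x).map (neg (M := ℕ)) := by
  ext (_ | _ | _ | _ | _) <;> simp [decode_eq_some_iff, OV.encode]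

theorem decode_and (x y : ℕ) : decode (Nat.pair 2 (Nat.pair x y)) =
    (decode x).bind fun φ => (decode y).map fun ψ => and (M := ℕ) φ ψ := by
  ext (_ | _ | _ | _ | _) <;> simp [decode_eq_some_iff, OV.encode, Option.bind_eq_some_iff]

theorem decode_ex (x : ℕ) : decode (Nat.pair 3 x) = (decode x).map (ex (M := ℕ)) := by
  ext (_ | _ | _ | _ | _) <;> simp [decode_eq_some_iff, OV.encode]

theorem decode_box (m x : ℕ) :
    decode (Nat.pair 4 (Nat.pair m x)) = (decode x).map (box (M := ℕ) m) := by
  ext (_ | _ | _ | _ | _) <;> simp [decode_eq_some_iff, OV.encode, and_comm, eq_comm]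

theorem decode_pair_eq_none {t : ℕ} (ht : 5 ≤ t) (x : ℕ) :
    decode (α := OV ℕ) (Nat.pair t x) = none := by
  ext (_ | _ | _ | _ | _) <;> simp [decode_eq_some_iff, OV.encode] <;> lia

end OV

variable {σ : Type} [Primcodable σ]

theorem lt_pair_succ (t x : ℕ) : x < Nat.pair (t + 1) x :=
  (Nat.right_le_pair 0 x).trans_lt (Nat.pair_lt_pair_left x t.succ_pos)

theorem primrec_of_pair_rec {f : ℕ → σ} {a : ℕ → σ} {h : ℕ → σ × σ × σ → σ} (ha : Primrec a)
    (hh : Primrec₂ h) (hf₀ : ∀ x, f (Nat.pair 0 x) = a x)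
    (hf₁ : ∀ t x, f (Nat.pair (t + 1) x) =
      h (Nat.pair (t + 1) x) (f x, f x.unpair.1, f x.unpair.2)) : Primrec f := by
  let g (l : List σ) : Option σ :=
    if l.length.unpair.1 = 0 then some (a l.length.unpair.2) else
      l[l.length.unpair.2]?.bind fun u => l[l.length.unpair.2.unpair.1]?.bind fun v =>
        l[l.length.unpair.2.unpair.2]?.map fun w => h l.length (u, v, w)
  have hg : Primrec g := by
    have hlen : Primrec fun l : List σ => l.length.unpair := Primrec.unpair.comp .list_length
    have hx : Primrec fun l : List σ => l.length.unpair.2 := Primrec.snd.comp hlen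
    have hx' : Primrec fun l : List σ => l.length.unpair.2.unpair := Primrec.unpair.comp hx
    refine .ite (Primrec.eq.comp (Primrec.fst.comp hlen) (.const 0))
      (Primrec.option_some.comp (ha.comp hx)) ?_
    refine .option_bind (Primrec.list_getElem?.comp .id hx) ?_
    refine .option_bind (Primrec.list_getElem?.comp .fst
      (Primrec.fst.comp (hx'.comp .fst))) ?_
    refine .option_map (Primrec.list_getElem?.comp (Primrec.fst.comp .fst)
      (Primrec.snd.comp (hx'.comp (Primrec.fst.comp .fst)))) ?_
    exact hh.comp (Primrec.list_length.comp (Primrec.fst.comp (Primrec.fst.comp .fst)))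
      (.pair (Primrec.snd.comp (Primrec.fst.comp .fst)) (.pair (Primrec.snd.comp .fst) .snd))
  refine (Primrec.nat_strong_rec (fun _ : Unit => f) (hg.comp .snd).to₂ fun _ n => ?_).comp
    (.const ()) .id
  obtain ⟨t, x, rfl⟩ : ∃ t x, Nat.pair t x = n := ⟨_, _, n.pair_unpair⟩
  cases t with
  | zero => simp [g, hf₀]
  | succ t =>
    have hx : x < Nat.pair (t + 1) x := lt_pair_succ t x
    simp [g, hf₁, hx, (Nat.unpair_left_le x).trans_lt hx,
      (Nat.unpair_right_le x).trans_lt hx]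

namespace OV

theorem primrec_decode_map {f : OV ℕ → σ} {a : ℕ → σ} {gneg gex : σ → σ} {gand : σ → σ → σ}
    {gbox : ℕ → σ → σ} (ha : Primrec a) (hneg : Primrec gneg) (hand : Primrec₂ gand)
    (hex : Primrec gex) (hbox : Primrec₂ gbox) (hf_atom : ∀ n, f (atom n) = a n)
    (hf_neg : ∀ φ, f (neg φ) = gneg (f φ)) (hf_and : ∀ φ ψ, f (and φ ψ) = gand (f φ) (f ψ))
    (hf_ex : ∀ φ, f (ex φ) = gex (f φ)) (hf_box : ∀ m φ, f (box m φ) = gbox m (f φ)) :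
    Primrec fun n => (decode n).map f := by
  let h (n : ℕ) (u : Option σ × Option σ × Option σ) : Option σ :=
    if n.unpair.1 = 1 then u.1.map gneg
    else if n.unpair.1 = 2 then u.2.1.bind fun s => u.2.2.map (gand s)
    else if n.unpair.1 = 3 then u.1.map gex
    else if n.unpair.1 = 4 then u.2.2.map (gbox n.unpair.2.unpair.1)
    else none
  have hh : Primrec₂ h := by
    have htag (k : ℕ) : PrimrecPred fun p : ℕ × Option σ × Option σ × Option σ =>
        p.1.unpair.1 = k :=
      Primrec.eq.comp (Primrec.fst.comp (Primrec.unpair.comp .fst)) (.const k)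
    have hu : Primrec fun p : ℕ × Option σ × Option σ × Option σ => p.2.1 := Primrec.fst.comp .snd
    have hv : Primrec fun p : ℕ × Option σ × Option σ × Option σ => p.2.2.1 :=
      Primrec.fst.comp (Primrec.snd.comp .snd)
    have hw : Primrec fun p : ℕ × Option σ × Option σ × Option σ => p.2.2.2 :=
      Primrec.snd.comp (Primrec.snd.comp .snd)
    have hm : Primrec fun p : ℕ × Option σ × Option σ × Option σ => p.1.unpair.2.unpair.1 :=
      Primrec.fst.comp (Primrec.unpair.comp (Primrec.snd.comp (Primrec.unpair.comp .fst)))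
    refine .ite (htag 1) (.option_map hu (hneg.comp .snd).to₂) <|
      .ite (htag 2) (.option_bind hv (.option_map (hw.comp .fst) ?_)) <|
      .ite (htag 3) (.option_map hu (hex.comp .snd).to₂) <|
      .ite (htag 4) (.option_map hw (hbox.comp (hm.comp .fst) .snd).to₂) (.const none)
    exact hand.comp (Primrec.snd.comp .fst) .snd
  refine primrec_of_pair_rec (Primrec.option_some.comp ha) hh
    (fun x => by simp [decode_atom, hf_atom]) fun t x => ?_
  obtain ⟨y, z, rfl⟩ : ∃ y z, Nat.pair y z = x := ⟨_, _, x.pair_unpair⟩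
  rcases t with _ | _ | _ | _ | t
  · simp [h, decode_neg, Option.map_map, Function.comp_def, hf_neg]
  · simp [h, decode_and, Option.map_bind, Option.bind_map, Function.comp_def, hf_and]
  · simp [h, decode_ex, Function.comp_def, hf_ex]
  · simp [h, decode_box, Function.comp_def, hf_box]
  · simp [h, decode_pair_eq_none (Nat.le_add_left 5 t)]

noncomputable instance : Primcodable (OV ℕ) where
  prim := by
    have hpair (t : ℕ) : Primrec₂ fun x y => Nat.pair t (Nat.pair x y) :=
      (Primrec₂.natPair.comp (.const t) Primrec₂.natPair :)
    refine Primrec.nat_iff.1 (Primrec.encode.comp (primrec_decode_map (f := Encodable.encode)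
      (Primrec₂.natPair.comp (.const 0) .id) (Primrec₂.natPair.comp (.const 1) .id) (hpair 2)
      (Primrec₂.natPair.comp (.const 3) .id) (hpair 4) ?_ ?_ ?_ ?_ ?_) |>.of_eq fun n => ?_)
    iterate 5 (intros; rfl)
    cases (decode n : Option (OV ℕ)) <;> rfl

theorem primrec_of_rec {f : OV ℕ → σ} {a : ℕ → σ} {gneg gex : σ → σ} {gand : σ → σ → σ}
    {gbox : ℕ → σ → σ} (ha : Primrec a) (hneg : Primrec gneg) (hand : Primrec₂ gand)
    (hex : Primrec gex) (hbox : Primrec₂ gbox) (hf_atom : ∀ n, f (atom n) = a n)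
    (hf_neg : ∀ φ, f (neg φ) = gneg (f φ)) (hf_and : ∀ φ ψ, f (and φ ψ) = gand (f φ) (f ψ))
    (hf_ex : ∀ φ, f (ex φ) = gex (f φ)) (hf_box : ∀ m φ, f (box m φ) = gbox m (f φ)) :
    Primrec f :=
  Primrec.nat_iff.1 <| Primrec.encode.comp <|
    primrec_decode_map ha hneg hand hex hbox hf_atom hf_neg hf_and hf_ex hf_box

theorem primrec_atom : Primrec (atom (M := ℕ)) :=
  Primrec.encode_iff.1 (Primrec₂.natPair.comp (.const 0) .id)

theorem primrec_neg : Primrec (neg (M := ℕ)) :=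
  Primrec.encode_iff.1 (Primrec₂.natPair.comp (.const 1) .encode)

theorem primrec_and : Primrec₂ (and (M := ℕ)) :=
  Primrec.encode_iff.1 <| Primrec₂.natPair.comp (.const 2) <|
    Primrec₂.natPair.comp (Primrec.encode.comp .fst) (Primrec.encode.comp .snd)

theorem primrec_ex : Primrec (ex (M := ℕ)) :=
  Primrec.encode_iff.1 (Primrec₂.natPair.comp (.const 3) .encode)

theorem primrec_box : Primrec₂ (box (M := ℕ)) :=
  Primrec.encode_iff.1 <| Primrec₂.natPair.comp (.const 4) <|
    Primrec₂.natPair.comp .fst (Primrec.encode.comp .snd)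

theorem primrec_disj : Primrec (disj (M := ℕ)) := by
  have hor : Primrec₂ (or (M := ℕ)) :=
    primrec_neg.comp (primrec_and.comp (primrec_neg.comp .fst) (primrec_neg.comp .snd))
  exact .list_foldr .id (.const _) (hor.comp (Primrec.fst.comp .snd) (Primrec.snd.comp .snd)).to₂

theorem primrec_types : Primrec (types (M := ℕ)) := by
  have hχ : Primrec fun p : (List (OV ℕ) × OV ℕ × List (OV ℕ)) × OV ℕ => p.1.2.1 :=
    Primrec.fst.comp (Primrec.snd.comp .fst)
  have hpair : Primrec₂ fun (p : List (OV ℕ) × OV ℕ × List (OV ℕ)) (t : OV ℕ) =>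
      [p.2.1.and t, p.2.1.neg.and t] :=
    Primrec.list_cons.comp (primrec_and.comp hχ .snd) <|
      Primrec.list_cons.comp (primrec_and.comp (primrec_neg.comp hχ) .snd) (.const [])
  exact .list_foldr .id (.const _) (Primrec.list_flatMap (Primrec.snd.comp .snd) hpair).to₂

theorem primrec_worldTypes : Primrec (worldTypes (M := ℕ)) :=
  primrec_types.comp (.list_map primrec_types (primrec_ex.comp .snd).to₂)

theorem primrec_subformulas : Primrec (subformulas (M := ℕ)) := by
  let f (φ : OV ℕ) := (φ, φ.subformulas)
  have hcons {α : Type} [Primcodable α] {g : α → OV ℕ} {l : α → List (OV ℕ)} (hg : Primrec g)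
      (hl : Primrec l) : Primrec fun x => (g x, g x :: l x) :=
    .pair hg (Primrec.list_cons.comp hg hl)
  have hf : Primrec f := primrec_of_rec
    (hcons primrec_atom (.const []))
    (hcons (primrec_neg.comp .fst) .snd)
    (hcons (primrec_and.comp (Primrec.fst.comp .fst) (Primrec.fst.comp .snd))
      (Primrec.list_append.comp (Primrec.snd.comp .fst) (Primrec.snd.comp .snd))).to₂
    (hcons (primrec_ex.comp .fst) .snd)
    (hcons (primrec_box.comp .fst (Primrec.fst.comp .snd)) (Primrec.snd.comp .snd)).to₂
    (fun _ => rfl) (fun _ => rfl) (fun _ _ => rfl) (fun _ => rfl) (fun _ _ => rfl)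
  exact Primrec.snd.comp hf

theorem primrec_surrogate {p : ℕ → Option ℕ} (hp : Primrec p) :
    Primrec (surrogate p Encodable.encode) := by
  let f (φ : OV ℕ) := (φ, surrogate p Encodable.encode φ)
  have hbox : Primrec₂ fun (m : ℕ) (s : OV ℕ × OV ℕ) =>
      (p m).elim (atom (2 * Encodable.encode (box m s.1) + 1)) fun n => box n s.2 := by
    have hcode := Primrec.encode.comp (primrec_box.comp .fst (Primrec.fst.comp .snd) :
      Primrec fun x : ℕ × OV ℕ × OV ℕ => box x.1 x.2.1)
    refine (Primrec.option_casesOn (hp.comp .fst)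
      (primrec_atom.comp (Primrec.nat_double_succ.comp hcode))
      (primrec_box.comp .snd (Primrec.snd.comp (Primrec.snd.comp .fst))).to₂).of_eq fun x => ?_
    cases h : p x.1 <;> simp [h]
  have hf : Primrec f := primrec_of_rec
    (.pair primrec_atom (primrec_atom.comp .nat_double))
    (.pair (primrec_neg.comp .fst) (primrec_neg.comp .snd))
    (Primrec.pair (primrec_and.comp (Primrec.fst.comp .fst) (Primrec.fst.comp .snd))
      (primrec_and.comp (Primrec.snd.comp .fst) (Primrec.snd.comp .snd))).to₂
    (.pair (primrec_ex.comp .fst) (primrec_ex.comp .snd))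
    (Primrec.pair (primrec_box.comp .fst (Primrec.fst.comp .snd)) hbox).to₂
    (fun _ => rfl) (fun _ => rfl) (fun _ _ => rfl) (fun _ => rfl) (fun _ _ => rfl)
  exact Primrec.snd.comp hf

end OV

theorem primrec_sublists' {α : Type} [Primcodable α] : Primrec (List.sublists' (α := α)) := by
  have hcons : Primrec₂ fun (p : List α × α × List (List α)) (s : List α) => p.2.1 :: s :=
    Primrec.list_cons.comp (Primrec.fst.comp (Primrec.snd.comp .fst)) .snd
  have hstep : Primrec₂ fun (_ : List α) (p : α × List (List α)) =>
      p.2 ++ p.2.map (List.cons p.1) :=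
    Primrec.list_append.comp (Primrec.snd.comp .snd) (.list_map (Primrec.snd.comp .snd) hcons)
  refine (Primrec.list_foldr .id (.const [[]]) hstep).of_eq fun l => ?_
  induction l with
  | nil => rfl
  | cons x l ih => rw [List.sublists'_cons, ← ih]; rfl

end Encoding

/-! ### The decision procedure -/

section ComputablePred

variable {α β : Type} [Primcodable α] [Primcodable β]

theorem computablePred_comp {p : β → Prop} {f : α → β} (hp : ComputablePred p)
    (hf : Computable f) : ComputablePred fun a => p (f a) :=
  .computable_of_manyOneReducible ⟨f, hf, fun _ => Iff.rfl⟩ hp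

theorem computablePred_and {p q : α → Prop} (hp : ComputablePred p) (hq : ComputablePred q) :
    ComputablePred fun a => p a ∧ q a := by
  classical
  exact ComputablePred.computable_iff.2
    ⟨_, Primrec.and.to_comp.comp hp.decide hq.decide, by simp⟩

theorem computable_list_any {l : α → List β} {f : α → β → Bool} (hl : Computable l)
    (hf : Computable₂ f) : Computable fun a => (l a).any (f a) := by
  have htake (l : List β) (h : β → Bool) (n : ℕ) :
      (Nat.rec false (fun i b => b || (l[i]?.map h).getD false) n : Bool) = (l.take n).any h := by
    induction n with
    | zero => simp
    | succ n ih =>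
      simp only [ih, List.take_add_one, List.any_append]
      cases l[n]? <;> simp
  have hstep : Computable₂ fun a (p : ℕ × Bool) =>
      p.2 || ((l a)[p.1]?.map (f a)).getD false :=
    Primrec.or.to_comp.comp (Computable.snd.comp .snd) <| Computable.option_getD
      (.option_map (Computable.list_getElem?.comp (hl.comp .fst) (Computable.fst.comp .snd))
        (hf.comp (Computable.fst.comp .fst) .snd)) (.const false)
  refine (Computable.nat_rec (Computable.list_length.comp hl) (.const false) hstep).of_eq
    fun a => ?_
  rw [htake, List.take_length]

theorem computablePred_exists_mem {l : α → List β} {R : α → β → Prop} (hl : Computable l)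
    (hR : ComputablePred fun x : α × β => R x.1 x.2) :
    ComputablePred fun a => ∃ b ∈ l a, R a b := by
  classical
  exact ComputablePred.computable_iff.2 ⟨_, computable_list_any hl hR.decide.to₂, by simp⟩

theorem computablePred_forall_mem {l : α → List β} {R : α → β → Prop} (hl : Computable l)
    (hR : ComputablePred fun x : α × β => R x.1 x.2) :
    ComputablePred fun a => ∀ b ∈ l a, R a b :=
  (computablePred_exists_mem (R := fun a b => ¬ R a b) hl hR.not).not.of_eq fun a => by simp

theorem computablePred_exists_encode_eq {p : α → Prop} (hp : ComputablePred p) :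
    ComputablePred fun n => ∃ a, p a ∧ Encodable.encode a = n := by
  classical
  have hdec : Computable fun n : ℕ =>
      ((Encodable.decode₂ α n).map fun a => decide (p a)).getD false :=
    .option_getD (.option_map Primrec.decode₂.to_comp (hp.decide.comp .snd).to₂) (.const false)
  refine ComputablePred.computable_iff.2 ⟨_, hdec, funext fun n => ?_⟩
  simp only [← Encodable.decode₂_eq_some]
  cases Encodable.decode₂ α n <;> simp

end ComputablePred

theorem globallyDecidable_iff {e : M → ℕ} {L : Set (OV M)} :
    GloballyDecidable e L ↔ ComputablePred fun x : OV ℕ × OV ℕ =>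
      Relation.Map (GlobalConseq L) (mapOp e) (mapOp e) x.1 x.2 := by
  constructor <;> intro h
  · refine (computablePred_comp h (.pair (Computable.encode.comp .fst)
      (Computable.encode.comp .snd))).of_eq fun x => ?_
    simp only [encode_eq_encode_mapOp, Encodable.encode_inj, Relation.Map]
  · refine (computablePred_comp (computablePred_exists_encode_eq h)
      Primrec₂.natPair.to_comp).of_eq fun x => ?_
    simp only [encode_eq_encode_mapOp, Relation.Map, Prod.exists, Encodable.encode_prod_val,
      Nat.pair_eq_pair]
    constructor
    · rintro ⟨_, _, ⟨φ, ψ, h, rfl, rfl⟩, hx⟩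
      exact ⟨φ, ψ, h, hx⟩
    · rintro ⟨φ, ψ, h, hx⟩
      exact ⟨_, _, ⟨φ, ψ, h, rfl, rfl⟩, hx⟩

theorem computablePred_mem_range_mapOp {e : M → ℕ} {L : Set (OV M)} (h : GloballyDecidable e L) :
    ComputablePred fun x => x ∈ Set.range (mapOp e) := by
  refine (computablePred_comp (globallyDecidable_iff.1 h) (.pair .id .id)).of_eq fun x => ?_
  constructor
  · rintro ⟨φ, -, -, hφ, -⟩
    exact ⟨φ, hφ⟩
  · rintro ⟨φ, hφ⟩
    exact ⟨φ, φ, .prem, hφ, hφ⟩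

/-- The numbering of the operators of a fusion by even and odd numbers. -/
def sumIndex {M₁ M₂ : Type} (e₁ : M₁ → ℕ) (e₂ : M₂ → ℕ) : M₁ ⊕ M₂ → ℕ :=
  Sum.elim (fun m => 2 * e₁ m) fun m => 2 * e₂ m + 1

/-- The counterpart of `Sum.getLeft?` on the indices given by `sumIndex`. -/
def evenHalf (n : ℕ) : Option ℕ := if n % 2 = 0 then some (n / 2) else none

/-- The counterpart of `Sum.getRight?` on the indices given by `sumIndex`. -/
def oddHalf (n : ℕ) : Option ℕ := if n % 2 = 0 then none else some (n / 2)

theorem evenHalf_two_mul (n : ℕ) : evenHalf (2 * n) = some n := by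
  simp [evenHalf]

theorem oddHalf_two_mul_add_one (n : ℕ) : oddHalf (2 * n + 1) = some n := by
  simp [oddHalf]; lia

theorem primrec_evenHalf : Primrec evenHalf :=
  .ite (Primrec.eq.comp (Primrec.nat_mod.comp .id (.const 2)) (.const 0))
    (Primrec.option_some.comp .nat_div2) (.const none)

theorem primrec_oddHalf : Primrec oddHalf :=
  .ite (Primrec.eq.comp (Primrec.nat_mod.comp .id (.const 2)) (.const 0))
    (.const none) (Primrec.option_some.comp .nat_div2)

section Fusion

variable {M₁ M₂ : Type} {e₁ : M₁ → ℕ} {e₂ : M₂ → ℕ}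

theorem sumIndex_injective (he₁ : Function.Injective e₁) (he₂ : Function.Injective e₂) :
    Function.Injective (sumIndex e₁ e₂) := by
  rintro (m | m) (n | n) h <;> simp only [sumIndex, Sum.elim_inl, Sum.elim_inr] at h
  · rw [@he₁ m n (by lia)]
  · lia
  · lia
  · rw [@he₂ m n (by lia)]

theorem evenHalf_sumIndex (m : M₁ ⊕ M₂) : evenHalf (sumIndex e₁ e₂ m) = m.getLeft?.map e₁ := by
  cases m <;> simp [evenHalf, sumIndex]

theorem oddHalf_sumIndex (m : M₁ ⊕ M₂) : oddHalf (sumIndex e₁ e₂ m) = m.getRight?.map e₂ := by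
  cases m with
  | inl m => simp [oddHalf, sumIndex]
  | inr m => exact oddHalf_two_mul_add_one (e₂ m)

theorem mem_range_mapOp_sumIndex_iff {c : OV ℕ → ℕ} {x : OV ℕ} :
    x ∈ Set.range (mapOp (sumIndex e₁ e₂)) ↔ ∀ χ ∈ x.subformulas,
      surrogate evenHalf c χ ∈ Set.range (mapOp e₁) ∧
        surrogate oddHalf c χ ∈ Set.range (mapOp e₂) := by
  constructor
  · rintro ⟨φ, rfl⟩
    rw [subformulas_mapOp, List.forall_mem_map]
    exact fun χ _ => ⟨⟨_, mapOp_surrogate evenHalf_sumIndex c χ⟩,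
      ⟨_, mapOp_surrogate oddHalf_sumIndex c χ⟩⟩
  · intro h
    induction x with
    | atom n => exact ⟨atom n, rfl⟩
    | neg x ih =>
      obtain ⟨φ, rfl⟩ := ih fun χ hχ => h χ (by simp [subformulas, hχ])
      exact ⟨φ.neg, rfl⟩
    | and x y ihx ihy =>
      obtain ⟨φ, rfl⟩ := ihx fun χ hχ => h χ (by simp [subformulas, hχ])
      obtain ⟨ψ, rfl⟩ := ihy fun χ hχ => h χ (by simp [subformulas, hχ])
      exact ⟨φ.and ψ, rfl⟩
    | ex x ih =>
      obtain ⟨φ, rfl⟩ := ih fun χ hχ => h χ (by simp [subformulas, hχ])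
      exact ⟨φ.ex, rfl⟩
    | box n x ih =>
      obtain ⟨φ, rfl⟩ := ih fun χ hχ => h χ (by simp [subformulas, hχ])
      obtain ⟨⟨η₁, h₁⟩, ⟨η₂, h₂⟩⟩ := h _ (mem_subformulas_self _)
      suffices ∃ m, sumIndex e₁ e₂ m = n from
        this.imp' (fun m => φ.box m) fun _ => by rintro rfl; rfl
      obtain ⟨k, rfl | rfl⟩ := n.even_or_odd'
      · rw [surrogate, evenHalf_two_mul] at h₁
        cases η₁ with
        | box m => exact ⟨.inl m, congrArg (2 * ·) (box.inj h₁).1⟩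
        | _ => cases h₁
      · rw [surrogate, oddHalf_two_mul_add_one] at h₂
        cases η₂ with
        | box m => exact ⟨.inr m, congrArg (2 * · + 1) (box.inj h₂).1⟩
        | _ => cases h₂

theorem isCertificate_mapOp_iff {N₁ N₂ N₁' N₂' : Type} {r₁ : OV M → OV N₁} {r₂ : OV M → OV N₂}
    {r₁' : OV N → OV N₁'} {r₂' : OV N → OV N₂'} {G₁ : OV N₁ → OV N₁ → Prop}
    {G₂ : OV N₂ → OV N₂ → Prop} {G₁' : OV N₁' → OV N₁' → Prop} {G₂' : OV N₂' → OV N₂' → Prop}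
    {f : M → N} {g₁ : OV N₁ → OV N₁'} {g₂ : OV N₂ → OV N₂'}
    (hr₁ : ∀ χ, g₁ (r₁ χ) = r₁' (χ.mapOp f)) (hr₂ : ∀ χ, g₂ (r₂ χ) = r₂' (χ.mapOp f))
    (hG₁ : ∀ χ η, G₁' (g₁ χ) (g₁ η) ↔ G₁ χ η) (hG₂ : ∀ χ η, G₂' (g₂ χ) (g₂ η) ↔ G₂ χ η)
    {φ ψ : OV M} {S : List (OV M)} :
    IsCertificate r₁' r₂' G₁' G₂' (φ.mapOp f) (ψ.mapOp f) (S.map (mapOp f)) ↔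
      IsCertificate r₁ r₂ G₁ G₂ φ ψ S := by
  have hθ : (φ.mapOp f).and (disj (S.map (mapOp f))) = (φ.and (disj S)).mapOp f := by
    rw [disj_map_mapOp, mapOp]
  have hneg (q : OV M) : (q.mapOp f).neg = q.neg.mapOp f := rfl
  simp only [isCertificate_iff, hθ, hneg, List.forall_mem_map, ← hr₁, ← hr₂, hG₁, hG₂]

theorem computablePred_isCertificate {r₁ r₂ : OV ℕ → OV ℕ} {G₁ G₂ : OV ℕ → OV ℕ → Prop}
    (hr₁ : Computable r₁) (hr₂ : Computable r₂)
    (hG₁ : ComputablePred fun x : OV ℕ × OV ℕ => G₁ x.1 x.2)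
    (hG₂ : ComputablePred fun x : OV ℕ × OV ℕ => G₂ x.1 x.2) :
    ComputablePred fun x : (OV ℕ × OV ℕ) × List (OV ℕ) =>
      IsCertificate r₁ r₂ G₁ G₂ x.1.1 x.1.2 x.2 := by
  have hθ : Computable fun x : (OV ℕ × OV ℕ) × List (OV ℕ) => x.1.1.and (disj x.2) :=
    (primrec_and.comp (Primrec.fst.comp .fst) (primrec_disj.comp .snd)).to_comp
  have hrealizes {r : OV ℕ → OV ℕ} {G : OV ℕ → OV ℕ → Prop} (hr : Computable r)
      (hG : ComputablePred fun x : OV ℕ × OV ℕ => G x.1 x.2) :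
      ComputablePred fun x : (OV ℕ × OV ℕ) × List (OV ℕ) =>
        ∀ q ∈ x.2, ¬ G (r (x.1.1.and (disj x.2))) (r q.neg) :=
    computablePred_forall_mem .snd (computablePred_comp hG <|
      .pair (hr.comp (hθ.comp .fst)) (hr.comp (primrec_neg.to_comp.comp .snd))).not
  have hrefutes := computablePred_comp hG₁ <|
    .pair (hr₁.comp hθ) (hr₁.comp (Computable.snd.comp .fst))
  exact (computablePred_and hrefutes.not
    (computablePred_and (hrealizes hr₁ hG₁) (hrealizes hr₂ hG₂))).of_eq fun x =>
      isCertificate_iff.symm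

variable {L₁ : Set (OV M₁)} {L₂ : Set (OV M₂)}

theorem computablePred_mem_range_mapOp_sumIndex (hd₁ : GloballyDecidable e₁ L₁)
    (hd₂ : GloballyDecidable e₂ L₂) :
    ComputablePred fun x => x ∈ Set.range (mapOp (sumIndex e₁ e₂)) := by
  refine (computablePred_forall_mem primrec_subformulas.to_comp (computablePred_and
    (computablePred_comp (computablePred_mem_range_mapOp hd₁)
      ((primrec_surrogate primrec_evenHalf).to_comp.comp .snd))
    (computablePred_comp (computablePred_mem_range_mapOp hd₂)
      ((primrec_surrogate primrec_oddHalf).to_comp.comp .snd)))).of_eq fun x =>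
        mem_range_mapOp_sumIndex_iff.symm

variable {d : DSem} {C₁ : Set (KFrame M₁)} {C₂ : Set (KFrame M₂)}

theorem map_globalConseq_fusion_iff (he₁ : Function.Injective e₁) (he₂ : Function.Injective e₂)
    (hc₁ : GloballyDComplete d L₁ C₁) (hc₂ : GloballyDComplete d L₂ C₂)
    (hdu₁ : ClosedDU C₁) (hdu₂ : ClosedDU C₂) {x y : OV ℕ} :
    Relation.Map (GlobalConseq (fusion L₁ L₂)) (mapOp (sumIndex e₁ e₂)) (mapOp (sumIndex e₁ e₂))
        x y ↔
      (x ∈ Set.range (mapOp (sumIndex e₁ e₂)) ∧ y ∈ Set.range (mapOp (sumIndex e₁ e₂))) ∧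
        ¬ ∃ S ∈ (worldTypes (x.subformulas ++ y.subformulas)).sublists',
          IsCertificate (surrogate evenHalf Encodable.encode) (surrogate oddHalf Encodable.encode)
            (Relation.Map (GlobalConseq L₁) (mapOp e₁) (mapOp e₁))
            (Relation.Map (GlobalConseq L₂) (mapOp e₂) (mapOp e₂)) x y S := by
  have hinj := mapOp_injective (sumIndex_injective he₁ he₂)
  suffices ∀ φ ψ, GlobalConseq (fusion L₁ L₂) φ ψ ↔
      ¬ ∃ S ∈ (worldTypes ((φ.mapOp (sumIndex e₁ e₂)).subformulas ++
          (ψ.mapOp (sumIndex e₁ e₂)).subformulas)).sublists',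
        IsCertificate (surrogate evenHalf Encodable.encode) (surrogate oddHalf Encodable.encode)
          (Relation.Map (GlobalConseq L₁) (mapOp e₁) (mapOp e₁))
          (Relation.Map (GlobalConseq L₂) (mapOp e₂) (mapOp e₂))
          (φ.mapOp (sumIndex e₁ e₂)) (ψ.mapOp (sumIndex e₁ e₂)) S by
    constructor
    · rintro ⟨φ, ψ, h, rfl, rfl⟩
      exact ⟨⟨⟨φ, rfl⟩, ⟨ψ, rfl⟩⟩, (this φ ψ).1 h⟩
    · rintro ⟨⟨⟨φ, rfl⟩, ⟨ψ, rfl⟩⟩, h⟩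
      exact ⟨φ, ψ, (this φ ψ).2 h, rfl, rfl⟩
  intro φ ψ
  rw [← not_iff_not, not_globalConseq_fusion_iff hc₁ hc₂ hdu₁ hdu₂
    (Encodable.encode_injective.comp hinj), not_not, subformulas_mapOp, subformulas_mapOp,
    ← List.map_append, worldTypes_map_mapOp, List.sublists'_map]
  simp only [List.mem_map, exists_exists_and_eq_and]
  refine exists_congr fun S => and_congr_right fun _ => (isCertificate_mapOp_iff
    (mapOp_surrogate evenHalf_sumIndex _) (mapOp_surrogate oddHalf_sumIndex _) ?_ ?_).symm
  · exact Relation.map_apply_apply (mapOp_injective he₁) (mapOp_injective he₁) _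
  · exact Relation.map_apply_apply (mapOp_injective he₂) (mapOp_injective he₂) _

theorem fusion_globallyDecidable_general (he₁ : Function.Injective e₁)
    (he₂ : Function.Injective e₂) (hdu₁ : ClosedDU C₁) (hdu₂ : ClosedDU C₂)
    (hc₁ : GloballyDComplete d L₁ C₁) (hc₂ : GloballyDComplete d L₂ C₂)
    (hd₁ : GloballyDecidable e₁ L₁) (hd₂ : GloballyDecidable e₂ L₂) :
    GloballyDecidable (sumIndex e₁ e₂) (fusion L₁ L₂) := by
  have hrange := computablePred_mem_range_mapOp_sumIndex hd₁ hd₂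
  have hcandidates : Computable fun x : OV ℕ × OV ℕ =>
      (worldTypes (x.1.subformulas ++ x.2.subformulas)).sublists' :=
    primrec_sublists'.to_comp.comp <| primrec_worldTypes.to_comp.comp <|
      Computable.list_append.comp (primrec_subformulas.to_comp.comp .fst)
        (primrec_subformulas.to_comp.comp .snd)
  have hcertificate := computablePred_isCertificate
    (primrec_surrogate primrec_evenHalf).to_comp (primrec_surrogate primrec_oddHalf).to_comp
    (globallyDecidable_iff.1 hd₁) (globallyDecidable_iff.1 hd₂)
  refine globallyDecidable_iff.2 (ComputablePred.of_eq (computablePred_and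
    (computablePred_and (computablePred_comp hrange .fst) (computablePred_comp hrange .snd))
    (computablePred_exists_mem (R := fun x S => IsCertificate _ _ _ _ x.1 x.2 S)
      hcandidates hcertificate).not) fun x => ?_)
  exact (map_globalConseq_fusion_iff he₁ he₂ hc₁ hc₂ hdu₁ hdu₂).symm

end Fusion

/-- Transfer of global decidability under fusion of
one-variable modal logics that are globally `d`-complete for classes of frames
closed under disjoint unions. -/
theorem fusion_globallyDecidable {M1 M2 : Type} [Finite M1] [Finite M2] (d : DSem)
    (e1 : M1 → ℕ) (e2 : M2 → ℕ)
    (he1 : Function.Injective e1) (he2 : Function.Injective e2)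
    (C1 : Set (KFrame M1)) (C2 : Set (KFrame M2))
    (hC1 : C1.Nonempty) (hC2 : C2.Nonempty)
    (hdu1 : ClosedDU C1) (hdu2 : ClosedDU C2)
    (L1 : Set (OV M1)) (L2 : Set (OV M2))
    (hL1 : IsOVLogic L1) (hL2 : IsOVLogic L2)
    (hc1 : GloballyDComplete d L1 C1) (hc2 : GloballyDComplete d L2 C2)
    (hd1 : GloballyDecidable e1 L1) (hd2 : GloballyDecidable e2 L2) :
    GloballyDecidable (Sum.elim (fun m => 2 * e1 m) (fun m => 2 * e2 m + 1))
      (fusion L1 L2) :=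
  fusion_globallyDecidable_general he1 he2 hdu1 hdu2 hc1 hc2 hd1 hd2

end OneVarML
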